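/- arXiv:2404.09746 — 7 statements merged into one kernel-verified Lean document; each statement's English description precedes it below -/
import Mathlib

section
/- Convergence of the gradient norm along the gradient flow (Euclidean case of Theorem 3.1(1)): suppose κ* := inf_{y ∈ ℝⁿ} ‖∇f(y)‖ > 0 and let x : [0,∞) → ℝⁿ be a gradient-flow trajectory of f. Then ‖∇f(x(t))‖ converges to κ* as t → ∞. -/
open Filter
open scoped RealInnerProductSpace

/-!
Write `g t = ‖∇f (x t)‖`. Two trajectories of the flow of a convex function never move apart;
comparing `x` with its own time shifts shows that `g` is antitone. Hence, for fixed `T` and `y`,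
convexity makes
`t * (f (x t) - f y) + ‖x t - y‖ ^ 2 / 2 + t ^ 2 * g T ^ 2 / 2`
antitone on `[0, T]`. Comparing its values at `0` and `T`, and bounding `f (x T) - f y` below by
`-‖∇f y‖ * ‖x T - y‖`, gives `g T ≤ ‖∇f y‖ + ‖x 0 - y‖ / T`. Let `T → ∞`, then take the infimum
over `y`.
-/

open Set Topology

section Curve

variable {E F : Type*} [NormedAddCommGroup E] [NormedSpace ℝ E]
  [NormedAddCommGroup F] [NormedSpace ℝ F]

lemma norm_deriv_le_of_eventually_norm_sub_le {γ : ℝ → E} {δ : ℝ → F} {γ' : E} {δ' : F} {t : ℝ}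
    (hγ : HasDerivWithinAt γ γ' (Ioi t) t) (hδ : HasDerivWithinAt δ δ' (Ioi t) t)
    (hle : ∀ᶠ r in 𝓝[>] t, ‖γ r - γ t‖ ≤ ‖δ r - δ t‖) : ‖γ'‖ ≤ ‖δ'‖ := by
  rw [hasDerivWithinAt_iff_tendsto_slope' self_notMem_Ioi] at hγ hδ
  refine le_of_tendsto_of_tendsto hγ.norm hδ.norm ?_
  filter_upwards [hle] with r hr
  simp only [slope_def_module, norm_smul]
  gcongr

lemma isIntegralCurveOn_Ici_comp_add {v : E → E} {x : ℝ → E} {a c : ℝ}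
    (hx : IsIntegralCurveOn x (fun _ ↦ v) (Ici a)) (hc : 0 ≤ c) :
    IsIntegralCurveOn (fun t ↦ x (t + c)) (fun _ ↦ v) (Ici a) := by
  refine (hx.comp_add c).mono fun t (ht : a ≤ t) ↦ ?_
  rw [mem_vadd_set_iff_neg_vadd_mem, neg_neg, vadd_eq_add, mem_Ici]
  linarith

end Curve

section Dissipative

variable {E : Type*} [NormedAddCommGroup E] [InnerProductSpace ℝ E]

/-- A vector field `v` is dissipative if `-v` is a monotone operator; its flow then contracts
distances. -/
def IsDissipative (v : E → E) : Prop :=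
  ∀ p q, ⟪p - q, v p - v q⟫ ≤ 0

lemma IsDissipative.antitoneOn_norm_sub {v : ℝ → E → E} {s : Set ℝ} {x z : ℝ → E}
    (hv : ∀ t ∈ s, IsDissipative (v t)) (hs : Convex ℝ s)
    (hx : IsIntegralCurveOn x v s) (hz : IsIntegralCurveOn z v s) :
    AntitoneOn (fun t ↦ ‖x t - z t‖) s := by
  have hderiv : ∀ t ∈ s, HasDerivWithinAt (fun r ↦ ‖x r - z r‖ ^ 2)
      (2 * ⟪x t - z t, v t (x t) - v t (z t)⟫) s t :=
    fun t ht ↦ ((hx t ht).sub (hz t ht)).norm_sq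
  have hsq : AntitoneOn (fun t ↦ ‖x t - z t‖ ^ 2) s :=
    antitoneOn_of_hasDerivWithinAt_nonpos hs (fun t ht ↦ (hderiv t ht).continuousWithinAt)
      (fun t ht ↦ (hderiv t (interior_subset ht)).mono interior_subset)
      (fun t ht ↦ by linarith [hv t (interior_subset ht) (x t) (z t)])
  exact fun r hr t ht hrt ↦ le_of_sq_le_sq (hsq hr ht hrt) (norm_nonneg _)

lemma IsDissipative.antitoneOn_norm_apply {v : E → E} (hv : IsDissipative v) {x : ℝ → E} {a : ℝ}
    (hx : IsIntegralCurveOn x (fun _ ↦ v) (Ici a)) :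
    AntitoneOn (fun t ↦ ‖v (x t)‖) (Ici a) := by
  intro s hs t ht hst
  have hshift := isIntegralCurveOn_Ici_comp_add hx (sub_nonneg.2 hst)
  have hIoi : Ioi s ⊆ Ici a := Ioi_subset_Ici hs
  suffices hle : ∀ᶠ r in 𝓝[>] s, ‖x (r + (t - s)) - x (s + (t - s))‖ ≤ ‖x r - x s‖ by
    simpa only [add_sub_cancel] using
      norm_deriv_le_of_eventually_norm_sub_le ((hshift s hs).mono hIoi) ((hx s hs).mono hIoi) hle
  filter_upwards [self_mem_nhdsWithin] with r (hr : s < r)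
  have hcontract := IsDissipative.antitoneOn_norm_sub (fun _ _ ↦ hv) (convex_Ici a)
    (isIntegralCurveOn_Ici_comp_add hx (sub_nonneg.2 hr.le)) hx
  simpa only [add_sub_cancel, add_sub_left_comm r t s] using hcontract hs ht hst

end Dissipative

/-- The Lyapunov function of the gradient flow of `f` along `x`, relative to a reference point `y`:
the value gap weighted by time, plus half the squared distance to `y`, plus a term recording the
decrease of the first two forced by a lower bound `L` for the gradient norm along `x`. -/
noncomputable def gradientFlowEnergy {E : Type*} [NormedAddCommGroup E]
    (f : E → ℝ) (x : ℝ → E) (y : E) (L t : ℝ) : ℝ :=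
  t * (f (x t) - f y) + ‖x t - y‖ ^ 2 / 2 + t ^ 2 * L ^ 2 / 2

section Gradient

variable {E : Type*} [NormedAddCommGroup E] [InnerProductSpace ℝ E] [CompleteSpace E]
  {f : E → ℝ} {x : ℝ → E}

lemma hasDerivWithinAt_comp_of_hasGradientWithinAt {u : Set E} {s : Set ℝ} {t : ℝ} {g x' : E}
    (hf : HasGradientWithinAt f g u (x t)) (hx : HasDerivWithinAt x x' s t) (hmaps : MapsTo x s u) :
    HasDerivWithinAt (fun r ↦ f (x r)) ⟪g, x'⟫ s t := by
  simpa using! hf.hasFDerivWithinAt.comp_hasDerivWithinAt t hx hmaps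

lemma add_inner_sub_le_of_hasGradientWithinAt {u : Set E} {g p q : E} (hconv : ConvexOn ℝ u f)
    (hf : HasGradientWithinAt f g u p) (hp : p ∈ u) (hq : q ∈ u) :
    f p + ⟪g, q - p⟫ ≤ f q := by
  let line : ℝ →ᵃ[ℝ] E := AffineMap.lineMap p q
  have hline0 : line 0 = p := AffineMap.lineMap_apply_zero p q
  have hline1 : line 1 = q := AffineMap.lineMap_apply_one p q
  have hderiv : HasDerivWithinAt (fun r ↦ f (line r)) ⟪g, q - p⟫ (line ⁻¹' u) 0 :=
    hasDerivWithinAt_comp_of_hasGradientWithinAt (hline0.symm ▸ hf)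
      AffineMap.hasDerivWithinAt_lineMap (mapsTo_preimage _ _)
  have hslope := (hconv.comp_affineMap line).le_slope_of_hasDerivWithinAt
    (by rwa [mem_preimage, hline0]) (by rwa [mem_preimage, hline1]) one_pos hderiv
  simp only [slope_def_field, Function.comp_apply, hline0, hline1, sub_zero, div_one] at hslope
  linarith

lemma hasDerivWithinAt_gradientFlowEnergy {s : Set ℝ} {t : ℝ} (hf : DifferentiableAt ℝ f (x t))
    (hx : HasDerivWithinAt x (-gradient f (x t)) s t) (y : E) (L : ℝ) :
    HasDerivWithinAt (gradientFlowEnergy f x y L)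
      (f (x t) + ⟪gradient f (x t), y - x t⟫ - f y + t * (L ^ 2 - ‖gradient f (x t)‖ ^ 2)) s t := by
  have hvalue := (hasDerivWithinAt_comp_of_hasGradientWithinAt
    (hasGradientWithinAt_univ.2 hf.hasGradientAt) hx (mapsTo_univ x s)).sub_const (f y)
  have hdist := (hx.sub_const y).norm_sq.div_const 2
  have hsq := (((hasDerivWithinAt_id t s).pow 2).mul_const (L ^ 2)).div_const 2
  refine ((((hasDerivWithinAt_id t s).mul hvalue).add hdist).add hsq).congr_deriv ?_
  rw [inner_neg_right, inner_neg_right, real_inner_self_eq_norm_sq, real_inner_comm,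
    ← neg_sub y, inner_neg_right]
  simp only [id]
  ring

variable (hconv : ConvexOn ℝ univ f) (hf : Differentiable ℝ f)
include hconv hf

lemma add_inner_gradient_sub_le_of_convexOn (p q : E) : f p + ⟪gradient f p, q - p⟫ ≤ f q :=
  add_inner_sub_le_of_hasGradientWithinAt hconv (hasGradientWithinAt_univ.2 (hf p).hasGradientAt)
    (mem_univ p) (mem_univ q)

lemma isDissipative_neg_gradient_of_convexOn : IsDissipative (fun p ↦ -gradient f p) := by
  intro p q
  have hpq := add_inner_gradient_sub_le_of_convexOn hconv hf p q
  have hqp := add_inner_gradient_sub_le_of_convexOn hconv hf q p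
  have hinner : ⟪p - q, -gradient f p - -gradient f q⟫ =
      ⟪gradient f p, q - p⟫ + ⟪gradient f q, p - q⟫ := by
    rw [← neg_sub q p, inner_neg_right, inner_neg_left, inner_sub_right, inner_neg_right,
      inner_neg_right, real_inner_comm, real_inner_comm (gradient f q)]
    ring
  linarith

lemma sub_le_norm_gradient_mul_norm_sub_of_convexOn (p q : E) :
    f p - f q ≤ ‖gradient f p‖ * ‖q - p‖ := by
  have hinner := neg_le_of_abs_le (abs_real_inner_le_norm (gradient f p) (q - p))
  linarith [add_inner_gradient_sub_le_of_convexOn hconv hf p q]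

lemma antitoneOn_norm_gradient_flow {a : ℝ}
    (hx : IsIntegralCurveOn x (fun _ p ↦ -gradient f p) (Ici a)) :
    AntitoneOn (fun t ↦ ‖gradient f (x t)‖) (Ici a) := by
  simpa only [norm_neg] using
    (isDissipative_neg_gradient_of_convexOn hconv hf).antitoneOn_norm_apply hx

lemma antitoneOn_gradientFlowEnergy {s : Set ℝ} {L : ℝ} (hs : Convex ℝ s) (hs₀ : s ⊆ Ici 0)
    (hx : IsIntegralCurveOn x (fun _ p ↦ -gradient f p) s) (hL : 0 ≤ L)
    (hLx : ∀ t ∈ s, L ≤ ‖gradient f (x t)‖) (y : E) :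
    AntitoneOn (gradientFlowEnergy f x y L) s := by
  have hderiv := fun t ht ↦ hasDerivWithinAt_gradientFlowEnergy (hf (x t)) (hx t ht) y L
  refine antitoneOn_of_hasDerivWithinAt_nonpos hs (fun t ht ↦ (hderiv t ht).continuousWithinAt)
    (fun t ht ↦ (hderiv t (interior_subset ht)).mono interior_subset) fun t ht ↦ ?_
  have hts := interior_subset ht
  have hsupport := add_inner_gradient_sub_le_of_convexOn hconv hf (x t) y
  have hgrad : t * (L ^ 2 - ‖gradient f (x t)‖ ^ 2) ≤ 0 :=
    mul_nonpos_of_nonneg_of_nonpos (hs₀ hts) (sub_nonpos.2 (pow_le_pow_left₀ hL (hLx t hts) 2))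
  linarith

lemma norm_gradient_flow_le_add_div (hx : IsIntegralCurveOn x (fun _ p ↦ -gradient f p) (Ici 0))
    {T : ℝ} (hT : 0 < T) (y : E) :
    ‖gradient f (x T)‖ ≤ ‖gradient f y‖ + ‖x 0 - y‖ / T := by
  have henergy := antitoneOn_gradientFlowEnergy hconv hf (convex_Icc 0 T) Icc_subset_Ici_self
    (hx.mono Icc_subset_Ici_self) (norm_nonneg _)
    (fun t ht ↦ antitoneOn_norm_gradient_flow hconv hf hx ht.1 hT.le ht.2) y
    (left_mem_Icc.2 hT.le) (right_mem_Icc.2 hT.le) hT.le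
  simp only [gradientFlowEnergy] at henergy
  have hvalue := mul_le_mul_of_nonneg_left
    (sub_le_norm_gradient_mul_norm_sub_of_convexOn hconv hf y (x T)) hT.le
  have hsq : (T * ‖gradient f (x T)‖) ^ 2 ≤ (T * ‖gradient f y‖) ^ 2 + ‖x 0 - y‖ ^ 2 := by
    linarith [sq_nonneg (‖x T - y‖ - T * ‖gradient f y‖)]
  have hle : T * ‖gradient f (x T)‖ ≤ T * ‖gradient f y‖ + ‖x 0 - y‖ := by
    refine le_of_sq_le_sq (hsq.trans ?_) (by positivity)
    exact pow_add_pow_le (by positivity) (by positivity) two_ne_zero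
  rw [← sub_le_iff_le_add', le_div_iff₀ hT]
  linarith

end Gradient

theorem gradient_flow_gradient_norm_tendsto_general
    {E : Type*} [NormedAddCommGroup E] [InnerProductSpace ℝ E] [CompleteSpace E]
    {f : E → ℝ} (hconv : ConvexOn ℝ univ f) (hf : Differentiable ℝ f)
    {x : ℝ → E} (hx : IsIntegralCurveOn x (fun _ p ↦ -gradient f p) (Ici 0)) :
    Tendsto (fun t ↦ ‖gradient f (x t)‖) atTop (𝓝 (⨅ y, ‖gradient f y‖)) := by
  have hbdd : BddBelow (range fun y ↦ ‖gradient f y‖) :=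
    ⟨0, forall_mem_range.2 fun y ↦ norm_nonneg _⟩
  refine tendsto_order.2 ⟨fun c hc ↦ .of_forall fun t ↦ hc.trans_le (ciInf_le hbdd (x t)),
    fun c hc ↦ ?_⟩
  obtain ⟨y, hy⟩ := exists_lt_of_ciInf_lt hc
  have hbound : Tendsto (fun t ↦ ‖gradient f y‖ + ‖x 0 - y‖ / t) atTop (𝓝 ‖gradient f y‖) := by
    simpa only [add_zero, id] using
      (tendsto_const_nhds.div_atTop tendsto_id).const_add ‖gradient f y‖
  filter_upwards [hbound.eventually_lt_const hy, eventually_gt_atTop 0] with t htc ht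
  exact (norm_gradient_flow_le_add_div hconv hf hx ht y).trans_lt htc

/-- Convergence of the gradient norm along the gradient flow (Euclidean case of
Theorem 3.1(1)): if `κ* := inf_y ‖∇f(y)‖ > 0` and `x` is a gradient-flow trajectory
of the convex `C¹` function `f`, then `‖∇f(x(t))‖ → κ*` as `t → ∞`. -/
theorem gradient_flow_gradient_norm_tendsto {n : ℕ} (hn : 1 ≤ n)
    (f : EuclideanSpace ℝ (Fin n) → ℝ)
    (hconv : ConvexOn ℝ Set.univ f) (hf : ContDiff ℝ 1 f)
    (hκ : 0 < ⨅ y, ‖gradient f y‖)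
    (x : ℝ → EuclideanSpace ℝ (Fin n))
    (hx : ∀ t : ℝ, 0 ≤ t → HasDerivAt x (-(gradient f (x t))) t) :
    Tendsto (fun t => ‖gradient f (x t)‖) atTop (nhds (⨅ y, ‖gradient f y‖)) := by
  exact gradient_flow_gradient_norm_tendsto_general hconv (hf.differentiable one_ne_zero)
    fun t ht ↦ (hx t ht).hasDerivWithinAt
end

section
/- Directional convergence of the gradient flow to the minimizer of the recession function (Euclidean case of Theorem 3.1(2)): suppose κ* := inf_{y ∈ ℝⁿ} ‖∇f(y)‖ > 0 and let x : [0,∞) → ℝⁿ be a gradient-flow trajectory of f. Then ‖x(t)‖ → ∞ as t → ∞, and x(t)/‖x(t)‖ converges to a unit vector ξ* satisfying f^∞(ξ*) = −κ*; moreover ξ* is the unique unit vector u with f^∞(u) ≤ −κ*. -/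
open Filter
open scoped RealInnerProductSpace

/-- The recession function (asymptotic slope) of `f`:
`f^∞(u) = sup_{s>0} (f(su) - f(0))/s`, valued in `EReal`. -/
noncomputable def recessionFn {n : ℕ} (f : EuclideanSpace ℝ (Fin n) → ℝ)
    (u : EuclideanSpace ℝ (Fin n)) : EReal :=
  ⨆ (s : ℝ) (_ : 0 < s), (((f (s • u) - f 0) / s : ℝ) : EReal)

/-!
Write `κ = inf ‖∇f‖`. Along the flow `f` decreases at rate `‖∇f‖ ^ 2 ≥ κ ‖x'‖`, so
`f (x t) ≤ f (x 0) - κ ‖x t - x 0‖`. Comparing with the affine minorant of `f` at any point `a`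
shows that the directions `x t / ‖x t‖` satisfy `limsup ⟪∇f a, x t / ‖x t‖⟫ ≤ -κ`. If moreover
`‖∇f a‖` is close to `κ`, uniform convexity of the norm leaves room for only a small set of such
unit vectors; hence the directions form a Cauchy family and the limit `ξ` is the only unit vector
with `⟪∇f a, ξ⟫ ≤ -κ` for all `a`. Since `f^∞ u = sup_a ⟪∇f a, u⟫`, this property says precisely
`f^∞ ξ ≤ -κ`.
-/

open Set Topology

section RecessionFunction

variable {V : Type*} [AddCommGroup V] [Module ℝ V]

/-- The recession function `f^∞ u = sup_{s > 0} (f (s u) - f 0) / s` on an arbitrary real vector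
space; on `EuclideanSpace ℝ (Fin n)` it is definitionally `recessionFn`. -/
noncomputable def recessionFunction (f : V → ℝ) (u : V) : EReal :=
  ⨆ (s : ℝ) (_ : 0 < s), (((f (s • u) - f 0) / s : ℝ) : EReal)

theorem recessionFunction_le_coe_iff {f : V → ℝ} {u : V} {r : ℝ} :
    recessionFunction f u ≤ r ↔ ∀ s : ℝ, 0 < s → f (s • u) - f 0 ≤ r * s := by
  simp only [recessionFunction, iSup_le_iff, EReal.coe_le_coe_iff]
  exact forall₂_congr fun s hs => div_le_iff₀ hs

end RecessionFunction

section ConvexFunction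

variable {E : Type*} [NormedAddCommGroup E] [NormedSpace ℝ E] {f : E → ℝ}

theorem add_fderiv_sub_le_of_convexOn {s : Set E} {a b : E} (hconv : ConvexOn ℝ s f)
    (ha : a ∈ s) (hb : b ∈ s) (hf : DifferentiableAt ℝ f a) :
    f a + fderiv ℝ f a (b - a) ≤ f b := by
  let line : ℝ →ᵃ[ℝ] E := AffineMap.lineMap a b
  have hline_conv : ConvexOn ℝ (line ⁻¹' s) (f ∘ line) := hconv.comp_affineMap line
  have hline_deriv : HasDerivAt (f ∘ line) (fderiv ℝ f a (b - a)) 0 := by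
    refine HasFDerivAt.comp_hasDerivAt 0 ?_ AffineMap.hasDerivAt_lineMap
    simpa only [line, AffineMap.lineMap_apply_zero] using hf.hasFDerivAt
  have hslope := hline_conv.le_slope_of_hasDerivAt (x := 0) (y := 1)
    (by simpa [line] using ha) (by simpa [line] using hb) one_pos hline_deriv
  simp only [slope_def_field, Function.comp_apply, line, AffineMap.lineMap_apply_one,
    AffineMap.lineMap_apply_zero, sub_zero, div_one] at hslope
  linarith

theorem recessionFunction_le_coe_iff_forall_fderiv_le (hconv : ConvexOn ℝ univ f)
    (hf : Differentiable ℝ f) {u : E} {r : ℝ} :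
    recessionFunction f u ≤ r ↔ ∀ a, fderiv ℝ f a u ≤ r := by
  have tangent (a b : E) : f a + fderiv ℝ f a (b - a) ≤ f b :=
    add_fderiv_sub_le_of_convexOn hconv (mem_univ a) (mem_univ b) (hf a)
  rw [recessionFunction_le_coe_iff]
  constructor
  · intro hr a
    let C := f 0 - f a + fderiv ℝ f a a
    have hlim : Tendsto (fun s : ℝ => r + C / s) atTop (𝓝 r) := by
      simpa only [id, add_zero] using ((tendsto_id (α := ℝ)).const_div_atTop C).const_add r
    refine ge_of_tendsto hlim ?_
    filter_upwards [eventually_gt_atTop 0] with s hs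
    have htan := tangent a (s • u)
    rw [map_sub, map_smul, smul_eq_mul] at htan
    rw [← sub_le_iff_le_add', le_div_iff₀ hs]
    linarith [hr s hs]
  · intro hr s hs
    have htan := tangent (s • u) 0
    rw [zero_sub, map_neg, map_smul, smul_eq_mul] at htan
    linarith [mul_le_mul_of_nonneg_left (hr (s • u)) hs.le]

theorem neg_iInf_norm_fderiv_le_recessionFunction (hconv : ConvexOn ℝ univ f)
    (hf : Differentiable ℝ f) {u : E} (hu : ‖u‖ ≤ 1) :
    ((-⨅ a, ‖fderiv ℝ f a‖ : ℝ) : EReal) ≤ recessionFunction f u := by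
  refine EReal.le_of_forall_lt_iff_le.1 fun r hr => ?_
  have hslope := (recessionFunction_le_coe_iff_forall_fderiv_le hconv hf).1 hr.le
  refine EReal.coe_le_coe (neg_le.1 (le_ciInf fun a => ?_))
  calc -r ≤ -fderiv ℝ f a u := neg_le_neg (hslope a)
    _ ≤ ‖fderiv ℝ f a u‖ := neg_le_abs _
    _ ≤ ‖fderiv ℝ f a‖ := (fderiv ℝ f a).unit_le_opNorm u hu

end ConvexFunction

section UniformlyConvex

variable {E : Type*} [NormedAddCommGroup E] [NormedSpace ℝ E] [UniformConvexSpace E]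
  {ι : Type*} [Nonempty ι] {ℓ : ι → StrongDual ℝ E}

theorem exists_pos_forall_dist_lt_of_le_neg {κ ε : ℝ} (hκ : 0 < κ) (hε : 0 < ε) :
    ∃ η > 0, ∀ (φ : StrongDual ℝ E) (u w : E), ‖φ‖ < κ + η → ‖u‖ = 1 → ‖w‖ = 1 →
      φ u ≤ -κ + η → φ w ≤ -κ + η → dist u w < ε := by
  obtain ⟨δ, hδ, hconvex⟩ := exists_forall_sphere_dist_add_le_two_sub E hε
  refine ⟨κ * δ / 4, by positivity, fun φ u w hφ hu hw hφu hφw => ?_⟩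
  by_contra! hfar
  rw [dist_eq_norm] at hfar
  have hmid : ‖u + w‖ ≤ 2 - δ := hconvex hu hw hfar
  have hlower : 2 * κ - κ * δ / 2 ≤ ‖φ‖ * ‖u + w‖ :=
    calc 2 * κ - κ * δ / 2 ≤ -φ (u + w) := by rw [map_add]; linarith
      _ ≤ ‖φ (u + w)‖ := neg_le_abs _
      _ ≤ ‖φ‖ * ‖u + w‖ := φ.le_opNorm _
  have hupper : ‖φ‖ * ‖u + w‖ ≤ (κ + κ * δ / 4) * (2 - δ) := by gcongr
  nlinarith [mul_pos hκ hδ, mul_pos (mul_pos hκ hδ) hδ]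

theorem eq_of_forall_le_neg_iInf_norm (hκ : 0 < ⨅ i, ‖ℓ i‖) {u w : E} (hu : ‖u‖ = 1)
    (hw : ‖w‖ = 1) (hℓu : ∀ i, ℓ i u ≤ -⨅ i, ‖ℓ i‖) (hℓw : ∀ i, ℓ i w ≤ -⨅ i, ‖ℓ i‖) :
    u = w := by
  refine eq_of_forall_dist_le fun ε hε => ?_
  obtain ⟨η, hη, hclose⟩ := exists_pos_forall_dist_lt_of_le_neg (E := E) hκ hε
  obtain ⟨i, hi⟩ := exists_lt_of_ciInf_lt (lt_add_of_pos_right (⨅ i, ‖ℓ i‖) hη)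
  exact (hclose (ℓ i) u w hi hu hw (by linarith [hℓu i]) (by linarith [hℓw i])).le

theorem exists_tendsto_of_eventually_le_neg_iInf_norm_add [CompleteSpace E] {T : Type*}
    {l : Filter T} [l.NeBot] {u : T → E} (hκ : 0 < ⨅ i, ‖ℓ i‖) (hu : ∀ᶠ t in l, ‖u t‖ = 1)
    (hℓu : ∀ i, ∀ η > 0, ∀ᶠ t in l, ℓ i (u t) ≤ -(⨅ i, ‖ℓ i‖) + η) :
    ∃ ξ, ‖ξ‖ = 1 ∧ Tendsto u l (𝓝 ξ) ∧ ∀ i, ℓ i ξ ≤ -⨅ i, ‖ℓ i‖ := by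
  have hcauchy : Cauchy (l.map u) := by
    refine Metric.cauchy_iff.2 ⟨inferInstance, fun ε hε => ?_⟩
    obtain ⟨η, hη, hclose⟩ := exists_pos_forall_dist_lt_of_le_neg (E := E) hκ hε
    obtain ⟨i, hi⟩ := exists_lt_of_ciInf_lt (lt_add_of_pos_right (⨅ i, ‖ℓ i‖) hη)
    refine ⟨{v | ‖v‖ = 1 ∧ ℓ i v ≤ -(⨅ i, ‖ℓ i‖) + η}, hu.and (hℓu i η hη), ?_⟩
    rintro v ⟨hv, hℓv⟩ w ⟨hw, hℓw⟩
    exact hclose (ℓ i) v w hi hv hw hℓv hℓw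
  obtain ⟨ξ, hξ⟩ := cauchy_map_iff_exists_tendsto.1 hcauchy
  refine ⟨ξ, tendsto_nhds_unique_of_eventuallyEq hξ.norm tendsto_const_nhds hu, hξ, fun i => ?_⟩
  exact le_of_forall_pos_le_add fun η hη =>
    le_of_tendsto (((ℓ i).continuous.tendsto ξ).comp hξ) (hℓu i η hη)

end UniformlyConvex

section GradientFlow

variable {E : Type*} [NormedAddCommGroup E] [InnerProductSpace ℝ E] [CompleteSpace E]
  {f : E → ℝ} {x : ℝ → E} {κ t : ℝ}

theorem norm_gradient_eq_norm_fderiv (f : E → ℝ) (a : E) : ‖gradient f a‖ = ‖fderiv ℝ f a‖ := by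
  rw [← toDual_gradient, LinearIsometryEquiv.norm_map]

/-- `x` is a gradient-flow trajectory of `f`: it solves `x' = -∇f(x)` on `[0, ∞)`. The values of
`x` at negative times are irrelevant, and the derivative at `0` is one-sided. -/
def IsGradientTrajectory (f : E → ℝ) (x : ℝ → E) : Prop :=
  ∀ t : ℝ, 0 ≤ t → HasDerivWithinAt x (-gradient f (x t)) (Ici 0) t

namespace IsGradientTrajectory

theorem continuousOn_Icc (hx : IsGradientTrajectory f x) : ContinuousOn x (Icc 0 t) :=
  fun s hs => (hx s hs.1).continuousWithinAt.mono Icc_subset_Ici_self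

theorem hasDerivWithinAt_Ici (hx : IsGradientTrajectory f x) (ht : 0 ≤ t) :
    HasDerivWithinAt x (-gradient f (x t)) (Ici t) t :=
  (hx t ht).mono (Ici_subset_Ici.2 ht)

theorem hasDerivWithinAt_comp (hx : IsGradientTrajectory f x) (hf : Differentiable ℝ f)
    (ht : 0 ≤ t) :
    HasDerivWithinAt (fun s => f (x s)) (-‖gradient f (x t)‖ ^ 2) (Ici t) t := by
  have hchain := (hf (x t)).hasFDerivAt.comp_hasDerivWithinAt t (hx.hasDerivWithinAt_Ici ht)
  rwa [map_neg, ← inner_gradient_left, real_inner_self_eq_norm_sq] at hchain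

theorem mul_norm_sub_le_sub (hx : IsGradientTrajectory f x) (hf : Differentiable ℝ f) (hκ : 0 ≤ κ)
    (hgrad : ∀ s, 0 ≤ s → κ ≤ ‖gradient f (x s)‖) (ht : 0 ≤ t) :
    κ * ‖x t - x 0‖ ≤ f (x 0) - f (x t) := by
  have hbound := image_norm_le_of_norm_deriv_right_le_deriv_boundary'
    (f := fun s => κ • (x s - x 0)) (B := fun s => f (x 0) - f (x s)) (a := 0) (b := t)
    ((hx.continuousOn_Icc.sub continuousOn_const).const_smul κ)
    (fun s hs => ((hx.hasDerivWithinAt_Ici hs.1).sub_const (x 0)).const_smul κ)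
    (by simp)
    (continuousOn_const.sub (hf.continuous.comp_continuousOn hx.continuousOn_Icc))
    (fun s hs => (hx.hasDerivWithinAt_comp hf hs.1).const_sub (f (x 0)))
    (fun s hs => by
      rw [norm_smul, Real.norm_of_nonneg hκ, norm_neg, neg_neg, sq]
      exact mul_le_mul_of_nonneg_right (hgrad s hs.1) (norm_nonneg _))
    (right_mem_Icc.2 ht)
  rwa [norm_smul, Real.norm_of_nonneg hκ] at hbound

theorem sq_mul_le_sub (hx : IsGradientTrajectory f x) (hf : Differentiable ℝ f) (hκ : 0 ≤ κ)
    (hgrad : ∀ s, 0 ≤ s → κ ≤ ‖gradient f (x s)‖) (ht : 0 ≤ t) :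
    κ ^ 2 * t ≤ f (x 0) - f (x t) :=
  image_le_of_deriv_right_le_deriv_boundary
    (f := fun s => κ ^ 2 * s) (B := fun s => f (x 0) - f (x s)) (a := 0) (b := t)
    (by fun_prop)
    (fun s _ => ((hasDerivAt_id s).const_mul (κ ^ 2)).hasDerivWithinAt)
    (by simp)
    (continuousOn_const.sub (hf.continuous.comp_continuousOn hx.continuousOn_Icc))
    (fun s hs => (hx.hasDerivWithinAt_comp hf hs.1).const_sub (f (x 0)))
    (fun s hs => by
      rw [mul_one, neg_neg]
      exact pow_le_pow_left₀ hκ (hgrad s hs.1) 2)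
    (right_mem_Icc.2 ht)

theorem tendsto_norm_atTop (hx : IsGradientTrajectory f x) (hconv : ConvexOn ℝ univ f)
    (hf : Differentiable ℝ f) (hκ : 0 < κ) (hgrad : ∀ s, 0 ≤ s → κ ≤ ‖gradient f (x s)‖) :
    Tendsto (fun t => ‖x t‖) atTop atTop := by
  have hslope_pos : 0 < ‖fderiv ℝ f (x 0)‖ := by
    rw [← norm_gradient_eq_norm_fderiv]
    exact hκ.trans_le (hgrad 0 le_rfl)
  refine .atTop_of_const_mul₀ hslope_pos ?_
  have hlinear :
      Tendsto (fun t => κ ^ 2 * t - ‖fderiv ℝ f (x 0)‖ * ‖x 0‖) atTop atTop :=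
    tendsto_atTop_add_const_right _ _ (tendsto_id.const_mul_atTop (by positivity))
  refine tendsto_atTop_mono' _ ?_ hlinear
  filter_upwards [eventually_ge_atTop 0] with t ht
  have htan := add_fderiv_sub_le_of_convexOn hconv (mem_univ (x 0)) (mem_univ (x t)) (hf (x 0))
  rw [sub_le_iff_le_add, ← mul_add]
  calc κ ^ 2 * t ≤ f (x 0) - f (x t) := hx.sq_mul_le_sub hf hκ.le hgrad ht
    _ ≤ -fderiv ℝ f (x 0) (x t - x 0) := by linarith
    _ ≤ ‖fderiv ℝ f (x 0) (x t - x 0)‖ := neg_le_abs _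
    _ ≤ ‖fderiv ℝ f (x 0)‖ * ‖x t - x 0‖ := (fderiv ℝ f (x 0)).le_opNorm _
    _ ≤ ‖fderiv ℝ f (x 0)‖ * (‖x t‖ + ‖x 0‖) := by gcongr; exact norm_sub_le _ _

theorem eventually_fderiv_normalize_le (hx : IsGradientTrajectory f x)
    (hconv : ConvexOn ℝ univ f) (hf : Differentiable ℝ f) (hκ : 0 < κ)
    (hgrad : ∀ s, 0 ≤ s → κ ≤ ‖gradient f (x s)‖) (a : E) {η : ℝ} (hη : 0 < η) :
    ∀ᶠ t in atTop, fderiv ℝ f a (‖x t‖⁻¹ • x t) ≤ -κ + η := by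
  let C := f (x 0) + κ * ‖x 0‖ - f a + fderiv ℝ f a a
  have hnorm := hx.tendsto_norm_atTop hconv hf hκ hgrad
  filter_upwards [eventually_ge_atTop 0, hnorm.eventually_gt_atTop 0,
    (hnorm.const_div_atTop C).eventually_le_const hη] with t ht hpos hCη
  have hmul : fderiv ℝ f a (x t) ≤ C - κ * ‖x t‖ := by
    have htan := add_fderiv_sub_le_of_convexOn hconv (mem_univ a) (mem_univ (x t)) (hf a)
    rw [map_sub] at htan
    have htriangle := mul_le_mul_of_nonneg_left (norm_sub_norm_le (x t) (x 0)) hκ.le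
    linarith [hx.mul_norm_sub_le_sub hf hκ.le hgrad ht]
  calc fderiv ℝ f a (‖x t‖⁻¹ • x t) = fderiv ℝ f a (x t) / ‖x t‖ := by
        rw [map_smul, smul_eq_mul, inv_mul_eq_div]
    _ ≤ (C - κ * ‖x t‖) / ‖x t‖ := by gcongr
    _ = -κ + C / ‖x t‖ := by field_simp; ring
    _ ≤ -κ + η := by gcongr

end IsGradientTrajectory

theorem gradient_flow_directional_convergence_general (hconv : ConvexOn ℝ univ f)
    (hf : Differentiable ℝ f) (hκ : 0 < ⨅ y, ‖gradient f y‖) (hx : IsGradientTrajectory f x) :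
    Tendsto (fun t => ‖x t‖) atTop atTop ∧
    ∃ ξ : E, ‖ξ‖ = 1 ∧
      Tendsto (fun t => ‖x t‖⁻¹ • x t) atTop (𝓝 ξ) ∧
      recessionFunction f ξ = ((-(⨅ y, ‖gradient f y‖) : ℝ) : EReal) ∧
      ∀ u : E, ‖u‖ = 1 →
        recessionFunction f u ≤ ((-(⨅ y, ‖gradient f y‖) : ℝ) : EReal) → u = ξ := by
  have hgrad (s : ℝ) (_ : 0 ≤ s) : ⨅ y, ‖gradient f y‖ ≤ ‖gradient f (x s)‖ :=
    ciInf_le ⟨0, forall_mem_range.2 fun y => norm_nonneg _⟩ (x s)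
  have hnorm := hx.tendsto_norm_atTop hconv hf hκ hgrad
  have hunit : ∀ᶠ t in atTop, ‖‖x t‖⁻¹ • x t‖ = 1 := by
    filter_upwards [hnorm.eventually_gt_atTop 0] with t ht
    rw [norm_smul, norm_inv, norm_norm, inv_mul_cancel₀ ht.ne']
  have hslope := hx.eventually_fderiv_normalize_le hconv hf hκ hgrad
  have hrec {u : E} {r : ℝ} : recessionFunction f u ≤ r ↔ ∀ a, fderiv ℝ f a u ≤ r :=
    recessionFunction_le_coe_iff_forall_fderiv_le hconv hf
  simp only [norm_gradient_eq_norm_fderiv] at hκ hslope ⊢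
  obtain ⟨ξ, hξ, hlim, hξslope⟩ :=
    exists_tendsto_of_eventually_le_neg_iInf_norm_add hκ hunit fun a η hη => hslope a hη
  refine ⟨hnorm, ξ, hξ, hlim, le_antisymm (hrec.2 hξslope) ?_, fun u hu hule => ?_⟩
  · exact neg_iInf_norm_fderiv_le_recessionFunction hconv hf hξ.le
  · exact eq_of_forall_le_neg_iInf_norm hκ hu hξ (hrec.1 hule) hξslope

end GradientFlow

/-- Directional convergence of the gradient flow to the minimizer of the recession
function (Euclidean case of Theorem 3.1(2)): if `κ* := inf_y ‖∇f(y)‖ > 0` and `x` is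
a gradient-flow trajectory of `f`, then `‖x(t)‖ → ∞` and `x(t)/‖x(t)‖` converges to
a unit vector `ξ*` with `f^∞(ξ*) = -κ*`, which is the unique unit vector `u` with
`f^∞(u) ≤ -κ*`. -/
theorem gradient_flow_directional_convergence {n : ℕ} (hn : 1 ≤ n)
    (f : EuclideanSpace ℝ (Fin n) → ℝ)
    (hconv : ConvexOn ℝ Set.univ f) (hf : ContDiff ℝ 1 f)
    (hκ : 0 < ⨅ y, ‖gradient f y‖)
    (x : ℝ → EuclideanSpace ℝ (Fin n))
    (hx : ∀ t : ℝ, 0 ≤ t → HasDerivAt x (-(gradient f (x t))) t) :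
    Tendsto (fun t => ‖x t‖) atTop atTop ∧
    ∃ ξ : EuclideanSpace ℝ (Fin n), ‖ξ‖ = 1 ∧
      Tendsto (fun t => ‖x t‖⁻¹ • x t) atTop (nhds ξ) ∧
      recessionFn f ξ = ((-(⨅ y, ‖gradient f y‖) : ℝ) : EReal) ∧
      ∀ u : EuclideanSpace ℝ (Fin n), ‖u‖ = 1 →
        recessionFn f u ≤ ((-(⨅ y, ‖gradient f y‖) : ℝ) : EReal) → u = ξ := by
  exact gradient_flow_directional_convergence_general hconv (hf.differentiable one_ne_zero) hκ
    fun t ht => (hx t ht).hasDerivWithinAt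
end

section
/- Velocity of escape of the gradient flow (Euclidean case of Proposition 3.4): suppose κ* := inf_{y ∈ ℝⁿ} ‖∇f(y)‖ > 0 and let x : [0,∞) → ℝⁿ be a gradient-flow trajectory of f. Then lim_{t→∞} ‖x(t) − x(0)‖ / t = κ*. -/
open Filter
open scoped RealInnerProductSpace

/-!
Write `κ` for the infimum of `‖∇ f‖`. Since `∇ f` is monotone, the distance from the flow to a fixed
point `y` grows with speed at most `‖∇ f y‖`; choosing `y` with `‖∇ f y‖` close to `κ` bounds the
velocity of escape from above by `κ`. Conversely, `f` decreases along the flow at rate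
`‖∇ f (x t)‖ ^ 2 ≥ κ ^ 2`, while the tangent plane of `f` at `y` shows that `f` cannot drop faster
than `‖∇ f y‖` times the distance covered. So the velocity is asymptotically at least
`κ ^ 2 / ‖∇ f y‖`, which is close to `κ` for the same choice of `y`.
-/

open Set
open scoped Gradient

section Calculus

theorem antitoneOn_of_hasDerivWithinAt_self_nonpos {D : Set ℝ} (hD : Convex ℝ D) {g g' : ℝ → ℝ}
    (hg : ∀ t ∈ D, HasDerivWithinAt g (g' t) D t) (hg' : ∀ t ∈ D, g' t ≤ 0) : AntitoneOn g D :=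
  antitoneOn_of_hasDerivWithinAt_nonpos hD (fun t ht => (hg t ht).continuousWithinAt)
    (fun t ht => (hg t (interior_subset ht)).mono interior_subset)
    (fun t ht => hg' t (interior_subset ht))

theorem eventually_div_lt_of_le_add_mul {r : ℝ → ℝ} {A G b : ℝ}
    (hr : ∀ t, 0 ≤ t → r t ≤ A + G * t) (hGb : G < b) : ∀ᶠ t in atTop, r t / t < b := by
  have hlim : Tendsto (fun t : ℝ => A / t + G) atTop (nhds (0 + G)) :=
    (tendsto_id.const_div_atTop A).add_const G
  filter_upwards [eventually_gt_atTop 0, hlim.eventually_lt_const (by rwa [zero_add])]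
    with t ht hlt
  calc r t / t ≤ (A + G * t) / t := by gcongr; exact hr t ht.le
    _ = A / t + G := by field_simp
    _ < b := hlt

variable {E : Type*} [NormedAddCommGroup E] [InnerProductSpace ℝ E]

theorem sqrt_norm_sq_add_sq_le_of_inner_deriv_le {z z' : ℝ → E} {G ε : ℝ} (hG : 0 ≤ G)
    (hε : 0 < ε) (hz : ∀ t ∈ Ici (0 : ℝ), HasDerivWithinAt z (z' t) (Ici 0) t)
    (hzz' : ∀ t ∈ Ici (0 : ℝ), ⟪z t, z' t⟫ ≤ G * ‖z t‖) {t : ℝ} (ht : 0 ≤ t) :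
    √(‖z t‖ ^ 2 + ε ^ 2) ≤ √(‖z 0‖ ^ 2 + ε ^ 2) + G * t := by
  have hderiv : ∀ s ∈ Ici (0 : ℝ), HasDerivWithinAt (fun s => √(‖z s‖ ^ 2 + ε ^ 2) - G * s)
      (2 * ⟪z s, z' s⟫ / (2 * √(‖z s‖ ^ 2 + ε ^ 2)) - G) (Ici 0) s := fun s hs => by
    simpa using! (((hz s hs).norm_sq.add_const (ε ^ 2)).sqrt (by positivity)).sub
      ((hasDerivWithinAt_id s _).const_mul G)
  have hnonpos : ∀ s ∈ Ici (0 : ℝ),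
      2 * ⟪z s, z' s⟫ / (2 * √(‖z s‖ ^ 2 + ε ^ 2)) - G ≤ 0 := fun s hs => by
    have hnorm : ‖z s‖ ≤ √(‖z s‖ ^ 2 + ε ^ 2) := Real.le_sqrt_of_sq_le (by nlinarith)
    rw [sub_nonpos, mul_div_mul_left _ _ two_ne_zero, div_le_iff₀ (by positivity)]
    exact (hzz' s hs).trans (by gcongr)
  have hanti := antitoneOn_of_hasDerivWithinAt_self_nonpos (convex_Ici 0) hderiv hnonpos
    self_mem_Ici ht ht
  simp only [mul_zero, sub_zero] at hanti
  linarith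

theorem norm_le_norm_add_mul_of_inner_deriv_le {z z' : ℝ → E} {G : ℝ} (hG : 0 ≤ G)
    (hz : ∀ t ∈ Ici (0 : ℝ), HasDerivWithinAt z (z' t) (Ici 0) t)
    (hzz' : ∀ t ∈ Ici (0 : ℝ), ⟪z t, z' t⟫ ≤ G * ‖z t‖) {t : ℝ} (ht : 0 ≤ t) :
    ‖z t‖ ≤ ‖z 0‖ + G * t := by
  -- The norm need not be differentiable where `z` vanishes, hence the regularisation by `ε`.
  refine le_of_forall_pos_le_add fun ε hε => ?_
  calc ‖z t‖ ≤ √(‖z t‖ ^ 2 + ε ^ 2) := Real.le_sqrt_of_sq_le (by nlinarith)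
    _ ≤ √(‖z 0‖ ^ 2 + ε ^ 2) + G * t := sqrt_norm_sq_add_sq_le_of_inner_deriv_le hG hε hz hzz' ht
    _ ≤ ‖z 0‖ + ε + G * t := by
      gcongr
      exact Real.sqrt_le_iff.2 ⟨by positivity, by nlinarith [norm_nonneg (z 0)]⟩
    _ = ‖z 0‖ + G * t + ε := by ring

end Calculus

theorem convexOn_add_hasFDerivWithinAt_le {E : Type*} [NormedAddCommGroup E] [NormedSpace ℝ E]
    {s : Set E} {f : E → ℝ} {f' : E →L[ℝ] ℝ} {y z : E} (hconv : ConvexOn ℝ s f)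
    (hy : y ∈ s) (hz : z ∈ s) (hf' : HasFDerivWithinAt f f' s y) :
    f y + f' (z - y) ≤ f z := by
  let line : ℝ →ᵃ[ℝ] E := AffineMap.lineMap y z
  have hline_zero : line 0 = y := AffineMap.lineMap_apply_zero y z
  have hline_one : line 1 = z := AffineMap.lineMap_apply_one y z
  have hderiv : HasDerivWithinAt (f ∘ line) (f' (z - y)) (line ⁻¹' s) 0 :=
    hf'.comp_hasDerivWithinAt_of_eq 0 AffineMap.hasDerivWithinAt_lineMap
      (mapsTo_preimage _ _) hline_zero.symm
  have hslope := (hconv.comp_affineMap line).le_slope_of_hasDerivWithinAt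
    (by simpa [hline_zero]) (by simpa [hline_one]) one_pos hderiv
  simp only [slope_def_field, Function.comp_apply, hline_zero, hline_one, sub_zero,
    div_one] at hslope
  linarith

section GradientFlow

variable {E : Type*} [NormedAddCommGroup E] [InnerProductSpace ℝ E] [CompleteSpace E]
  {f : E → ℝ} {x : ℝ → E} {κ t : ℝ}

theorem convexOn_add_inner_gradient_le (hconv : ConvexOn ℝ univ f) {y : E}
    (hf : DifferentiableAt ℝ f y) (z : E) : f y + ⟪∇ f y, z - y⟫ ≤ f z := by
  rw [inner_gradient_left]
  exact convexOn_add_hasFDerivWithinAt_le hconv (mem_univ y) (mem_univ z)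
    hf.hasFDerivAt.hasFDerivWithinAt

theorem convexOn_sub_norm_gradient_mul_le (hconv : ConvexOn ℝ univ f) {y : E}
    (hf : DifferentiableAt ℝ f y) (z : E) : f y - ‖∇ f y‖ * ‖z - y‖ ≤ f z := by
  have htangent := convexOn_add_inner_gradient_le hconv hf z
  have hcs := neg_le_of_abs_le (abs_real_inner_le_norm (∇ f y) (z - y))
  linarith

theorem convexOn_inner_neg_gradient_le (hconv : ConvexOn ℝ univ f) {y z : E}
    (hy : DifferentiableAt ℝ f y) (hz : DifferentiableAt ℝ f z) :
    ⟪z - y, -∇ f z⟫ ≤ ‖∇ f y‖ * ‖z - y‖ := by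
  have hflip : ⟪z - y, -∇ f z⟫ = ⟪∇ f z, y - z⟫ := by
    rw [inner_neg_right, ← inner_neg_left, neg_sub, real_inner_comm]
  have htangent := convexOn_add_inner_gradient_le hconv hz y
  have hlower := convexOn_sub_norm_gradient_mul_le hconv hy z
  linarith

theorem norm_sub_le_of_isIntegralCurveOn_neg_gradient (hconv : ConvexOn ℝ univ f)
    (hf : Differentiable ℝ f) (hx : IsIntegralCurveOn x (fun _ y => -∇ f y) (Ici 0))
    (y : E) (ht : 0 ≤ t) : ‖x t - y‖ ≤ ‖x 0 - y‖ + ‖∇ f y‖ * t :=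
  norm_le_norm_add_mul_of_inner_deriv_le (norm_nonneg _) (fun s hs => (hx s hs).sub_const y)
    (fun s _ => convexOn_inner_neg_gradient_le hconv (hf y) (hf (x s))) ht

theorem apply_add_sq_mul_le_of_isIntegralCurveOn_neg_gradient (hf : Differentiable ℝ f)
    (hx : IsIntegralCurveOn x (fun _ y => -∇ f y) (Ici 0)) (hκ : 0 ≤ κ)
    (hκ_le : ∀ s ∈ Ici (0 : ℝ), κ ≤ ‖∇ f (x s)‖) (ht : 0 ≤ t) : f (x t) + κ ^ 2 * t ≤ f (x 0) := by
  have hderiv : ∀ s ∈ Ici (0 : ℝ), HasDerivWithinAt (fun s => f (x s) + κ ^ 2 * s)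
      (-‖∇ f (x s)‖ ^ 2 + κ ^ 2) (Ici 0) s := fun s hs => by
    have hcomp := (hf (x s)).hasFDerivAt.comp_hasDerivWithinAt s (hx s hs)
    rw [← inner_gradient_left, inner_neg_right, real_inner_self_eq_norm_sq] at hcomp
    simpa using! hcomp.add ((hasDerivWithinAt_id s _).const_mul (κ ^ 2))
  have hnonpos : ∀ s ∈ Ici (0 : ℝ), -‖∇ f (x s)‖ ^ 2 + κ ^ 2 ≤ 0 := fun s hs =>
    neg_add_nonpos_iff.2 (pow_le_pow_left₀ hκ (hκ_le s hs) 2)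
  simpa using antitoneOn_of_hasDerivWithinAt_self_nonpos (convex_Ici 0) hderiv hnonpos
    self_mem_Ici ht ht

theorem sq_mul_le_of_isIntegralCurveOn_neg_gradient (hconv : ConvexOn ℝ univ f)
    (hf : Differentiable ℝ f) (hx : IsIntegralCurveOn x (fun _ y => -∇ f y) (Ici 0))
    (hκ : 0 ≤ κ) (hκ_le : ∀ s ∈ Ici (0 : ℝ), κ ≤ ‖∇ f (x s)‖) (y : E) (ht : 0 ≤ t) :
    κ ^ 2 * t ≤ f (x 0) - f y + ‖∇ f y‖ * ‖x 0 - y‖ + ‖∇ f y‖ * ‖x t - x 0‖ := by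
  have hdescent := apply_add_sq_mul_le_of_isIntegralCurveOn_neg_gradient hf hx hκ hκ_le ht
  have hlower := convexOn_sub_norm_gradient_mul_le hconv (hf y) (x t)
  have htriangle : ‖∇ f y‖ * ‖x t - y‖ ≤ ‖∇ f y‖ * (‖x t - x 0‖ + ‖x 0 - y‖) := by
    gcongr
    exact norm_sub_le_norm_sub_add_norm_sub _ _ _
  linarith

theorem eventually_norm_sub_div_lt_of_norm_gradient_lt (hconv : ConvexOn ℝ univ f)
    (hf : Differentiable ℝ f) (hx : IsIntegralCurveOn x (fun _ y => -∇ f y) (Ici 0))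
    {y : E} {b : ℝ} (hb : ‖∇ f y‖ < b) : ∀ᶠ t in atTop, ‖x t - x 0‖ / t < b := by
  refine eventually_div_lt_of_le_add_mul (A := 2 * ‖x 0 - y‖) (fun t ht => ?_) hb
  have hdist := norm_sub_le_of_isIntegralCurveOn_neg_gradient hconv hf hx y ht
  have htriangle := norm_sub_le_norm_sub_add_norm_sub (x t) y (x 0)
  rw [norm_sub_rev y] at htriangle
  linarith

theorem eventually_lt_norm_sub_div_of_mul_norm_gradient_lt (hconv : ConvexOn ℝ univ f)
    (hf : Differentiable ℝ f) (hx : IsIntegralCurveOn x (fun _ y => -∇ f y) (Ici 0))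
    (hκ : 0 ≤ κ) (hκ_le : ∀ s ∈ Ici (0 : ℝ), κ ≤ ‖∇ f (x s)‖) {y : E} {a : ℝ}
    (ha : ‖∇ f y‖ * a < κ ^ 2) :
    ∀ᶠ t in atTop, a < ‖x t - x 0‖ / t := by
  have hgrowth : ∀ t, 0 ≤ t → -(‖∇ f y‖ * ‖x t - x 0‖) ≤
      (f (x 0) - f y + ‖∇ f y‖ * ‖x 0 - y‖) + -κ ^ 2 * t := fun t ht => by
    linarith [sq_mul_le_of_isIntegralCurveOn_neg_gradient hconv hf hx hκ hκ_le y ht]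
  filter_upwards [eventually_div_lt_of_le_add_mul hgrowth (neg_lt_neg ha)] with t hlt
  rw [neg_div, neg_lt_neg_iff, mul_div_assoc] at hlt
  exact lt_of_mul_lt_mul_left hlt (norm_nonneg _)

theorem gradient_flow_velocity_of_escape_general (hconv : ConvexOn ℝ univ f)
    (hf : Differentiable ℝ f) (hx : IsIntegralCurveOn x (fun _ y => -∇ f y) (Ici 0)) :
    Tendsto (fun t => ‖x t - x 0‖ / t) atTop (nhds (⨅ y, ‖∇ f y‖)) := by
  set κ := ⨅ y, ‖∇ f y‖
  have hκ : 0 ≤ κ := Real.iInf_nonneg fun _ => norm_nonneg _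
  have hκ_le : ∀ y, κ ≤ ‖∇ f y‖ := ciInf_le ⟨0, forall_mem_range.2 fun _ => norm_nonneg _⟩
  refine tendsto_order.2 ⟨fun a ha => ?_, fun b hb => ?_⟩
  · rcases lt_or_ge a 0 with ha_neg | ha_nonneg
    · filter_upwards [eventually_ge_atTop 0] with t ht
      exact ha_neg.trans_le (by positivity)
    · obtain ⟨y, hy⟩ : ∃ y, ‖∇ f y‖ < κ + (κ - a) := exists_lt_of_ciInf_lt (by linarith)
      have hya : ‖∇ f y‖ * a < κ ^ 2 := by
        calc ‖∇ f y‖ * a ≤ (κ + (κ - a)) * a := by gcongr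
          _ = κ ^ 2 - (κ - a) ^ 2 := by ring
          _ < κ ^ 2 := sub_lt_self _ (pow_pos (sub_pos.2 ha) 2)
      exact eventually_lt_norm_sub_div_of_mul_norm_gradient_lt hconv hf hx hκ
        (fun s _ => hκ_le (x s)) hya
  · obtain ⟨y, hy⟩ := exists_lt_of_ciInf_lt hb
    exact eventually_norm_sub_div_lt_of_norm_gradient_lt hconv hf hx hy

end GradientFlow

/-- Velocity of escape of the gradient flow (Euclidean case of Proposition 3.4):
if `κ* := inf_y ‖∇f(y)‖ > 0` and `x` is a gradient-flow trajectory of `f`, then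
`‖x(t) - x(0)‖ / t → κ*` as `t → ∞`. -/
theorem gradient_flow_velocity_of_escape {n : ℕ} (hn : 1 ≤ n)
    (f : EuclideanSpace ℝ (Fin n) → ℝ)
    (hconv : ConvexOn ℝ Set.univ f) (hf : ContDiff ℝ 1 f)
    (hκ : 0 < ⨅ y, ‖gradient f y‖)
    (x : ℝ → EuclideanSpace ℝ (Fin n))
    (hx : ∀ t : ℝ, 0 ≤ t → HasDerivAt x (-(gradient f (x t))) t) :
    Tendsto (fun t => ‖x t - x 0‖ / t) atTop (nhds (⨅ y, ‖gradient f y‖)) :=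
  gradient_flow_velocity_of_escape_general hconv (hf.differentiable one_ne_zero)
    fun t ht => (hx t ht).hasDerivWithinAt
end

section
/- One-step descent inequality with the next gradient (Euclidean case of Lemma 3.8(1)): for every x ∈ ℝⁿ, the point x⁺ := x − (1/L)∇f(x) satisfies f(x⁺) ≤ f(x) − (1/L)‖∇f(x⁺)‖². -/
open Filter
open scoped RealInnerProductSpace

/-!
Write `g = ∇ f x`, `h = ∇ f x⁺`. Comparing the quadratic upper bound of `f` at `x` with the
tangent of `f` at `y`, at the point where they are closest, strengthens the tangent inequality to
`f y + ⟪∇ f y, x - y⟫ + ‖∇ f x - ∇ f y‖² / (2L) ≤ f x`.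
At `y = x⁺`, where `x - x⁺ = g / L`, this reads `f x⁺ + (‖g‖² + ‖h‖²) / (2L) ≤ f x`. Adding to the
strengthened inequality its copy with `x` and `y` exchanged shows that the gradient is cocoercive,
so `‖h‖² ≤ ⟪h, g⟫` and hence `‖h‖ ≤ ‖g‖`.
-/

lemma le_add_deriv_add_half_of_deriv_le {φ φ' : ℝ → ℝ} {C : ℝ}
    (hφ : ∀ t ∈ Set.Icc (0 : ℝ) 1, HasDerivWithinAt φ (φ' t) (Set.Icc 0 1) t)
    (hC : ∀ t ∈ Set.Ico (0 : ℝ) 1, φ' t ≤ φ' 0 + C * t) :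
    φ 1 ≤ φ 0 + φ' 0 + C / 2 := by
  let B : ℝ → ℝ := fun t ↦ φ 0 + t * φ' 0 + C / 2 * t ^ 2
  have hB : ∀ t, HasDerivAt B (φ' 0 + C * t) t := fun t ↦ by
    refine ((((hasDerivAt_id t).mul_const _).const_add (φ 0)).add
      ((hasDerivAt_pow 2 t).const_mul _)).congr_deriv ?_
    norm_num
    ring
  have hle : φ 1 ≤ B 1 :=
    image_le_of_deriv_right_le_deriv_boundary (fun t ht ↦ (hφ t ht).continuousWithinAt)
      (fun t ht ↦ (hφ t (Set.Ico_subset_Icc_self ht)).mono_of_mem_nhdsWithin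
        (Icc_mem_nhdsGE_of_mem ht))
      (by simp [B]) (fun t _ ↦ (hB t).continuousAt.continuousWithinAt)
      (fun t _ ↦ (hB t).hasDerivWithinAt) hC (Set.right_mem_Icc.2 zero_le_one)
  simpa [B] using hle

section NormedSpace

variable {E : Type*} [NormedAddCommGroup E] [NormedSpace ℝ E] {s : Set E} {f : E → ℝ} {x y : E}

lemma hasDerivWithinAt_comp_lineMap_Icc {f' : E →L[ℝ] ℝ} {t : ℝ} (hs : Convex ℝ s)
    (hx : x ∈ s) (hy : y ∈ s) (hf : HasFDerivWithinAt f f' s (AffineMap.lineMap x y t)) :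
    HasDerivWithinAt (f ∘ AffineMap.lineMap x y) (f' (y - x)) (Set.Icc (0 : ℝ) 1) t :=
  hf.comp_hasDerivWithinAt t AffineMap.hasDerivWithinAt_lineMap
    fun _ ht ↦ hs.lineMap_mem hx hy ht

lemma add_apply_sub_le_of_convexOn {f' : E →L[ℝ] ℝ} (hconv : ConvexOn ℝ s f)
    (hf : HasFDerivWithinAt f f' s x) (hx : x ∈ s) (hy : y ∈ s) :
    f x + f' (y - x) ≤ f y := by
  have hline : ConvexOn ℝ (Set.Icc (0 : ℝ) 1) (f ∘ AffineMap.lineMap x y) :=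
    (hconv.comp_affineMap (AffineMap.lineMap x y)).subset
      (fun _ ht ↦ hconv.1.lineMap_mem hx hy ht) (convex_Icc 0 1)
  have hderiv : HasDerivWithinAt (f ∘ AffineMap.lineMap x y) (f' (y - x)) (Set.Icc (0 : ℝ) 1) 0 :=
    hasDerivWithinAt_comp_lineMap_Icc hconv.1 hx hy (by rwa [AffineMap.lineMap_apply_zero])
  have hslope : f' (y - x) ≤ f y - f x := by
    simpa [slope_def_field] using
      hline.le_slope_of_hasDerivWithinAt (by simp) (by simp) one_pos hderiv
  linarith

lemma le_add_apply_sub_add_of_norm_fderiv_sub_le {f' : E → E →L[ℝ] ℝ} {L : ℝ}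
    (hs : Convex ℝ s) (hf : ∀ z ∈ s, HasFDerivWithinAt f (f' z) s z) (hx : x ∈ s) (hy : y ∈ s)
    (hL : ∀ z ∈ s, ‖f' z - f' x‖ ≤ L * ‖z - x‖) :
    f y ≤ f x + f' x (y - x) + L / 2 * ‖y - x‖ ^ 2 := by
  let p : ℝ → E := AffineMap.lineMap x y
  have hp : ∀ t ∈ Set.Icc (0 : ℝ) 1, p t ∈ s := fun t ht ↦ hs.lineMap_mem hx hy ht
  have hp0 : p 0 = x := AffineMap.lineMap_apply_zero x y
  have hp1 : p 1 = y := AffineMap.lineMap_apply_one x y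
  have hderiv_le : ∀ t ∈ Set.Ico (0 : ℝ) 1,
      f' (p t) (y - x) ≤ f' (p 0) (y - x) + L * ‖y - x‖ ^ 2 * t := fun t ht ↦ by
    have hdist : ‖p t - x‖ = t * ‖y - x‖ := by
      rw [← dist_eq_norm, dist_lineMap_left, Real.norm_of_nonneg ht.1, dist_comm, dist_eq_norm]
    calc f' (p t) (y - x) = f' x (y - x) + (f' (p t) - f' x) (y - x) := by simp
      _ ≤ f' x (y - x) + ‖f' (p t) - f' x‖ * ‖y - x‖ := by
        gcongr
        exact (le_abs_self _).trans ((f' (p t) - f' x).le_opNorm _)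
      _ ≤ f' x (y - x) + L * (t * ‖y - x‖) * ‖y - x‖ := by
        rw [← hdist]
        gcongr
        exact hL _ (hp t (Set.Ico_subset_Icc_self ht))
      _ = f' (p 0) (y - x) + L * ‖y - x‖ ^ 2 * t := by rw [hp0]; ring
  have hle : f (p 1) ≤ f (p 0) + f' (p 0) (y - x) + L * ‖y - x‖ ^ 2 / 2 :=
    le_add_deriv_add_half_of_deriv_le (φ' := fun t ↦ f' (p t) (y - x))
      (fun t ht ↦ hasDerivWithinAt_comp_lineMap_Icc hs hx hy (hf _ (hp t ht))) hderiv_le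
  rw [hp0, hp1] at hle
  linarith

end NormedSpace

section InnerProductSpace

open scoped Gradient

variable {F : Type*} [NormedAddCommGroup F] [InnerProductSpace ℝ F] [CompleteSpace F]
  {f : F → ℝ} {L : ℝ}

lemma add_inner_gradient_sub_le_of_convexOn_s6 (hconv : ConvexOn ℝ Set.univ f) {x : F}
    (hf : DifferentiableAt ℝ f x) (y : F) : f x + ⟪∇ f x, y - x⟫ ≤ f y := by
  rw [inner_gradient_left]
  exact add_apply_sub_le_of_convexOn hconv hf.hasFDerivAt.hasFDerivWithinAt trivial trivial

lemma norm_gradient_sub_gradient (f : F → ℝ) (x y : F) :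
    ‖∇ f x - ∇ f y‖ = ‖fderiv ℝ f x - fderiv ℝ f y‖ := by
  rw [← toDual_gradient, ← toDual_gradient, ← map_sub, LinearIsometryEquiv.norm_map]

lemma le_add_inner_gradient_sub_add_of_norm_gradient_sub_le (hf : Differentiable ℝ f) {x : F}
    (hL : ∀ z, ‖∇ f z - ∇ f x‖ ≤ L * ‖z - x‖) (y : F) :
    f y ≤ f x + ⟪∇ f x, y - x⟫ + L / 2 * ‖y - x‖ ^ 2 := by
  rw [inner_gradient_left]
  exact le_add_apply_sub_add_of_norm_fderiv_sub_le convex_univ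
    (fun z _ ↦ (hf z).hasFDerivAt.hasFDerivWithinAt) trivial trivial
    fun z _ ↦ (norm_gradient_sub_gradient f z x).symm.trans_le (hL z)

lemma add_inner_gradient_sub_add_norm_sq_le_of_convexOn (hL : 0 < L)
    (hconv : ConvexOn ℝ Set.univ f) (hf : Differentiable ℝ f) {x : F}
    (hsmooth : ∀ z, ‖∇ f z - ∇ f x‖ ≤ L * ‖z - x‖) (y : F) :
    f y + ⟪∇ f y, x - y⟫ + 1 / (2 * L) * ‖∇ f x - ∇ f y‖ ^ 2 ≤ f x := by
  let d := ∇ f x - ∇ f y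
  -- `z` minimizes the quadratic upper bound at `x` minus the tangent at `y`.
  let z := x - (1 / L) • d
  have hlower : f y + ⟪∇ f y, z - y⟫ ≤ f z := add_inner_gradient_sub_le_of_convexOn_s6 hconv (hf y) z
  have hupper : f z ≤ f x + ⟪∇ f x, z - x⟫ + L / 2 * ‖z - x‖ ^ 2 :=
    le_add_inner_gradient_sub_add_of_norm_gradient_sub_le hf hsmooth z
  have hzx : z - x = -((1 / L) • d) := sub_sub_cancel_left x _
  have hinner : ⟪∇ f y, z - y⟫ - ⟪∇ f x, z - x⟫ = ⟪∇ f y, x - y⟫ + 1 / L * ‖d‖ ^ 2 := by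
    have hzy : z - y = (x - y) + (z - x) := by abel
    rw [hzy, inner_add_right, add_sub_assoc, ← inner_sub_left, hzx, inner_neg_right,
      inner_smul_right, ← neg_sub (∇ f x), inner_neg_left, real_inner_self_eq_norm_sq]
    ring
  have hnorm : L / 2 * ‖z - x‖ ^ 2 = 1 / (2 * L) * ‖d‖ ^ 2 := by
    rw [hzx, norm_neg, norm_smul, Real.norm_of_nonneg (by positivity)]
    field_simp
  have hhalf : 1 / L * ‖d‖ ^ 2 = 2 * (1 / (2 * L) * ‖d‖ ^ 2) := by field_simp
  change _ + 1 / (2 * L) * ‖d‖ ^ 2 ≤ _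
  linarith

lemma norm_gradient_sub_sq_le_mul_inner_of_convexOn (hL : 0 < L)
    (hconv : ConvexOn ℝ Set.univ f) (hf : Differentiable ℝ f)
    (hsmooth : ∀ y z, ‖∇ f y - ∇ f z‖ ≤ L * ‖y - z‖) (x y : F) :
    ‖∇ f x - ∇ f y‖ ^ 2 ≤ L * ⟪∇ f x - ∇ f y, x - y⟫ := by
  have hxy := add_inner_gradient_sub_add_norm_sq_le_of_convexOn hL hconv hf (hsmooth · x) y
  have hyx := add_inner_gradient_sub_add_norm_sq_le_of_convexOn hL hconv hf (hsmooth · y) x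
  rw [norm_sub_rev, ← neg_sub x y, inner_neg_right] at hyx
  have hsum : 1 / L * ‖∇ f x - ∇ f y‖ ^ 2 ≤ ⟪∇ f x - ∇ f y, x - y⟫ := by
    have hhalf : 1 / L = 1 / (2 * L) + 1 / (2 * L) := by field_simp; norm_num
    rw [inner_sub_left, hhalf, add_mul]
    linarith
  rwa [one_div, inv_mul_le_iff₀ hL] at hsum

lemma norm_gradient_gradient_step_le_of_convexOn (hL : 0 < L)
    (hconv : ConvexOn ℝ Set.univ f) (hf : Differentiable ℝ f)
    (hsmooth : ∀ y z, ‖∇ f y - ∇ f z‖ ≤ L * ‖y - z‖) (x : F) :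
    ‖∇ f (x - (1 / L) • ∇ f x)‖ ≤ ‖∇ f x‖ := by
  set g := ∇ f x
  set h := ∇ f (x - (1 / L) • g)
  have hcoercive : ‖g - h‖ ^ 2 ≤ ⟪g - h, g⟫ := by
    have := norm_gradient_sub_sq_le_mul_inner_of_convexOn hL hconv hf hsmooth x (x - (1 / L) • g)
    rwa [sub_sub_cancel, inner_smul_right, ← mul_assoc, mul_one_div_cancel hL.ne', one_mul] at this
  have hinner : ‖h‖ ^ 2 ≤ ⟪h, g⟫ := by
    rw [norm_sub_sq_real, inner_sub_left, real_inner_self_eq_norm_sq, real_inner_comm] at hcoercive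
    linarith
  have hmul : ‖h‖ ^ 2 ≤ ‖h‖ * ‖g‖ := hinner.trans (real_inner_le_norm h g)
  nlinarith [norm_nonneg g, norm_nonneg h]

lemma gradient_step_le_sub_norm_sq_add_norm_sq_of_convexOn (hL : 0 < L)
    (hconv : ConvexOn ℝ Set.univ f) (hf : Differentiable ℝ f) {x : F}
    (hsmooth : ∀ z, ‖∇ f z - ∇ f x‖ ≤ L * ‖z - x‖) :
    f (x - (1 / L) • ∇ f x) ≤
      f x - 1 / (2 * L) * (‖∇ f x‖ ^ 2 + ‖∇ f (x - (1 / L) • ∇ f x)‖ ^ 2) := by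
  have hstep := add_inner_gradient_sub_add_norm_sq_le_of_convexOn hL hconv hf hsmooth
    (x - (1 / L) • ∇ f x)
  have hhalf : 1 / L = 2 * (1 / (2 * L)) := by field_simp
  rw [sub_sub_cancel, inner_smul_right, norm_sub_sq_real, real_inner_comm] at hstep
  linear_combination hstep + ⟪∇ f x, ∇ f (x - (1 / L) • ∇ f x)⟫ * hhalf

theorem descent_with_next_gradient_general (hL : 0 < L)
    (hconv : ConvexOn ℝ Set.univ f) (hf : Differentiable ℝ f)
    (hsmooth : ∀ y z, ‖∇ f y - ∇ f z‖ ≤ L * ‖y - z‖) (x : F) :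
    f (x - (1 / L) • ∇ f x) ≤ f x - (1 / L) * ‖∇ f (x - (1 / L) • ∇ f x)‖ ^ 2 := by
  set h := ∇ f (x - (1 / L) • ∇ f x)
  have hnorm : ‖h‖ ≤ ‖∇ f x‖ := norm_gradient_gradient_step_le_of_convexOn hL hconv hf hsmooth x
  calc f (x - (1 / L) • ∇ f x) ≤ f x - 1 / (2 * L) * (‖∇ f x‖ ^ 2 + ‖h‖ ^ 2) :=
        gradient_step_le_sub_norm_sq_add_norm_sq_of_convexOn hL hconv hf (hsmooth · x)
    _ ≤ f x - 1 / (2 * L) * (‖h‖ ^ 2 + ‖h‖ ^ 2) := by gcongr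
    _ = f x - (1 / L) * ‖h‖ ^ 2 := by field_simp; ring

end InnerProductSpace

/-- One-step descent inequality with the next gradient (Euclidean case of Lemma 3.8(1)):
for a convex differentiable `L`-smooth `f` and any `x`, the point
`x⁺ := x - (1/L)∇f(x)` satisfies `f(x⁺) ≤ f(x) - (1/L)‖∇f(x⁺)‖²`. -/
theorem descent_with_next_gradient {n : ℕ} (hn : 1 ≤ n)
    (f : EuclideanSpace ℝ (Fin n) → ℝ) (L : ℝ) (hL : 0 < L)
    (hconv : ConvexOn ℝ Set.univ f) (hdiff : Differentiable ℝ f)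
    (hsmooth : ∀ y z : EuclideanSpace ℝ (Fin n),
      ‖gradient f y - gradient f z‖ ≤ L * ‖y - z‖)
    (x : EuclideanSpace ℝ (Fin n)) :
    f (x - (1 / L) • gradient f x) ≤
      f x - (1 / L) * ‖gradient f (x - (1 / L) • gradient f x)‖ ^ 2 :=
  descent_with_next_gradient_general hL hconv hdiff hsmooth x
end

section
/- Monotone decrease of the gradient norm under a gradient step (Euclidean case of Lemma 3.8(2)): for every x ∈ ℝⁿ, the point x⁺ := x − (1/L)∇f(x) satisfies ‖∇f(x⁺)‖ ≤ ‖∇f(x)‖. -/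
open Filter
open scoped RealInnerProductSpace

/-!
Comparing the tangent plane of `f` at `x` with the quadratic upper bound of `f` at `y`, both
evaluated at `y - (1 / L) • (∇f y - ∇f x)`, the minimizer of the difference of the two bounds,
improves the tangent inequality by `‖∇f y - ∇f x‖² / (2L)`. Adding this to the same inequality
with `x` and `y` exchanged shows that `∇f` is cocoercive (Baillon–Haddad). At `x` and
`x - t • ∇f x`, cocoercivity gives `‖a - b‖² ≤ L * t * ⟪a - b, a⟫` for the gradients `a` and `b`,
and expanding `‖b‖² = ‖a - (a - b)‖²` yields `‖b‖ ≤ ‖a‖` for every step size `0 ≤ t ≤ 2 / L`.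
-/

lemma le_add_half_of_deriv_sub_le_mul {g g' : ℝ → ℝ} {C : ℝ}
    (hg : ∀ t ∈ Set.Icc (0 : ℝ) 1, HasDerivAt g (g' t) t)
    (hC : ∀ t ∈ Set.Icc (0 : ℝ) 1, g' t - g' 0 ≤ C * t) :
    g 1 ≤ g 0 + g' 0 + C / 2 := by
  let bound : ℝ → ℝ := fun t ↦ g 0 + t * g' 0 + C / 2 * t ^ 2
  have hbound : ∀ t, HasDerivAt bound (g' 0 + C * t) t := fun t ↦
    ((((hasDerivAt_id t).mul_const _).const_add (g 0)).add
      ((hasDerivAt_pow 2 t).const_mul (C / 2))).congr_deriv (by norm_num; ring)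
  have hle : g 1 ≤ bound 1 :=
    image_le_of_deriv_right_le_deriv_boundary
      (fun t ht ↦ (hg t ht).continuousAt.continuousWithinAt)
      (fun t ht ↦ (hg t (Set.Ico_subset_Icc_self ht)).hasDerivWithinAt)
      (by simp [bound])
      (fun t _ ↦ (hbound t).continuousAt.continuousWithinAt)
      (fun t _ ↦ (hbound t).hasDerivWithinAt)
      (fun t ht ↦ sub_le_iff_le_add'.1 (hC t (Set.Ico_subset_Icc_self ht)))
      (Set.right_mem_Icc.2 zero_le_one)
  simpa [bound] using hle

section NormedSpace

variable {E : Type*} [NormedAddCommGroup E] [NormedSpace ℝ E] {f : E → ℝ} {x y : E}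

lemma tangent_le_of_convexOn {s : Set E} {f' : E →L[ℝ] ℝ} (hf : ConvexOn ℝ s f)
    (hf' : HasFDerivWithinAt f f' s x) (hx : x ∈ s) (hy : y ∈ s) :
    f x + f' (y - x) ≤ f y := by
  let line := AffineMap.lineMap (k := ℝ) x y
  have hline_zero : line 0 = x := AffineMap.lineMap_apply_zero x y
  have hline_one : line 1 = y := AffineMap.lineMap_apply_one x y
  have hderiv : HasDerivWithinAt (f ∘ line) (f' (y - x)) (line ⁻¹' s) 0 :=
    HasFDerivWithinAt.comp_hasDerivWithinAt 0 (hline_zero.symm ▸ hf')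
      AffineMap.hasDerivWithinAt_lineMap (Set.mapsTo_preimage line s)
  have hslope : f' (y - x) ≤ slope (f ∘ line) 0 1 :=
    (hf.comp_affineMap line).le_slope_of_hasDerivWithinAt
      (by simpa [hline_zero]) (by simpa [hline_one]) one_pos hderiv
  simp only [slope_def_field, Function.comp_apply, hline_zero, hline_one, sub_zero, div_one]
    at hslope
  linarith

lemma le_quadratic_of_lipschitz_fderiv {f' : E → E →L[ℝ] ℝ} {L : ℝ}
    (hf' : ∀ z ∈ segment ℝ x y, HasFDerivAt f (f' z) z)
    (hL : ∀ z ∈ segment ℝ x y, ‖f' z - f' x‖ ≤ L * ‖z - x‖) :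
    f y ≤ f x + f' x (y - x) + L / 2 * ‖y - x‖ ^ 2 := by
  let line := AffineMap.lineMap (k := ℝ) x y
  have hmem : ∀ t ∈ Set.Icc (0 : ℝ) 1, line t ∈ segment ℝ x y := fun t ht ↦
    segment_eq_image_lineMap ℝ x y ▸ Set.mem_image_of_mem line ht
  have hderiv : ∀ t ∈ Set.Icc (0 : ℝ) 1, HasDerivAt (f ∘ line) (f' (line t) (y - x)) t :=
    fun t ht ↦ (hf' _ (hmem t ht)).comp_hasDerivAt t AffineMap.hasDerivAt_lineMap
  have hderiv_sub_le : ∀ t ∈ Set.Icc (0 : ℝ) 1,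
      f' (line t) (y - x) - f' (line 0) (y - x) ≤ L * ‖y - x‖ ^ 2 * t := by
    intro t ht
    have hdist : ‖line t - x‖ = t * ‖y - x‖ := by
      simp [line, AffineMap.lineMap_apply, norm_smul, abs_of_nonneg ht.1]
    rw [show line 0 = x from AffineMap.lineMap_apply_zero x y]
    calc (f' (line t) - f' x) (y - x)
        ≤ ‖f' (line t) - f' x‖ * ‖y - x‖ :=
          (le_abs_self _).trans ((f' (line t) - f' x).le_opNorm (y - x))
      _ ≤ L * (t * ‖y - x‖) * ‖y - x‖ := by
          gcongr
          exact hdist ▸ hL _ (hmem t ht)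
      _ = L * ‖y - x‖ ^ 2 * t := by ring
  have hle := le_add_half_of_deriv_sub_le_mul hderiv hderiv_sub_le
  simp only [Function.comp_apply, line, AffineMap.lineMap_apply_zero,
    AffineMap.lineMap_apply_one] at hle
  linarith

end NormedSpace

section InnerProductSpace

variable {F : Type*} [NormedAddCommGroup F] [InnerProductSpace ℝ F]

lemma norm_le_norm_of_norm_sub_sq_le_mul_inner {a b : F} {c : ℝ} (hc₀ : 0 ≤ c) (hc₂ : c ≤ 2)
    (h : ‖a - b‖ ^ 2 ≤ c * ⟪a - b, a⟫) : ‖b‖ ≤ ‖a‖ := by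
  have hle_two : ‖a - b‖ ^ 2 ≤ 2 * ⟪a - b, a⟫ := by
    rcases hc₀.eq_or_lt with rfl | hc
    · have hab : a - b = 0 := by simpa using h
      simp [hab]
    · have hinner : 0 ≤ ⟪a - b, a⟫ := nonneg_of_mul_nonneg_right ((sq_nonneg _).trans h) hc
      exact h.trans (mul_le_mul_of_nonneg_right hc₂ hinner)
  have hexpand : ‖b‖ ^ 2 = ‖a‖ ^ 2 - 2 * ⟪a - b, a⟫ + ‖a - b‖ ^ 2 := by
    rw [real_inner_comm, ← norm_sub_sq_real, sub_sub_cancel]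
  exact le_of_sq_le_sq (by linarith) (norm_nonneg a)

variable [CompleteSpace F] {f : F → ℝ} {L : ℝ}

lemma norm_fderiv_sub_fderiv_eq_norm_gradient_sub (x y : F) :
    ‖fderiv ℝ f x - fderiv ℝ f y‖ = ‖gradient f x - gradient f y‖ := by
  rw [← toDual_gradient, ← toDual_gradient, ← map_sub, LinearIsometryEquiv.norm_map]

lemma tangent_add_norm_gradient_sub_sq_le (hL : 0 < L) (hconv : ConvexOn ℝ Set.univ f)
    (hdiff : Differentiable ℝ f)
    (hsmooth : ∀ y z, ‖gradient f y - gradient f z‖ ≤ L * ‖y - z‖) (x y : F) :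
    f x + ⟪gradient f x, y - x⟫ + 1 / (2 * L) * ‖gradient f y - gradient f x‖ ^ 2 ≤ f y := by
  set d := gradient f y - gradient f x with hd
  set z := y - (1 / L) • d with hz
  have hlower : f x + ⟪gradient f x, z - x⟫ ≤ f z := by
    rw [inner_gradient_left]
    exact tangent_le_of_convexOn hconv (hdiff x).hasFDerivAt.hasFDerivWithinAt
      (Set.mem_univ x) (Set.mem_univ z)
  have hupper : f z ≤ f y + ⟪gradient f y, z - y⟫ + L / 2 * ‖z - y‖ ^ 2 := by
    rw [inner_gradient_left]
    exact le_quadratic_of_lipschitz_fderiv (fun w _ ↦ (hdiff w).hasFDerivAt)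
      fun w _ ↦ (norm_fderiv_sub_fderiv_eq_norm_gradient_sub w y).trans_le (hsmooth w y)
  have hinner : ⟪gradient f x, z - x⟫ - ⟪gradient f y, z - y⟫
      = ⟪gradient f x, y - x⟫ + 1 / L * ‖d‖ ^ 2 := by
    rw [← real_inner_self_eq_norm_sq, hz, hd]
    simp only [inner_sub_left, inner_sub_right, inner_smul_right]
    ring
  have hstep : L / 2 * ‖z - y‖ ^ 2 = 1 / (2 * L) * ‖d‖ ^ 2 := by
    rw [hz, sub_sub_cancel_left, norm_neg, norm_smul, mul_pow, Real.norm_of_nonneg (by positivity)]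
    field_simp
  have hhalf : 1 / L * ‖d‖ ^ 2 = 2 * (1 / (2 * L) * ‖d‖ ^ 2) := by field_simp
  linarith

theorem gradient_cocoercive (hL : 0 < L) (hconv : ConvexOn ℝ Set.univ f)
    (hdiff : Differentiable ℝ f)
    (hsmooth : ∀ y z, ‖gradient f y - gradient f z‖ ≤ L * ‖y - z‖) (x y : F) :
    ‖gradient f x - gradient f y‖ ^ 2 ≤ L * ⟪gradient f x - gradient f y, x - y⟫ := by
  have hxy := tangent_add_norm_gradient_sub_sq_le hL hconv hdiff hsmooth x y
  have hyx := tangent_add_norm_gradient_sub_sq_le hL hconv hdiff hsmooth y x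
  rw [norm_sub_rev, ← neg_sub x y, inner_neg_right] at hxy
  have hsum : 1 / L * ‖gradient f x - gradient f y‖ ^ 2
      ≤ ⟪gradient f x - gradient f y, x - y⟫ := by
    have hhalves : 1 / L = 1 / (2 * L) + 1 / (2 * L) := by field_simp; norm_num
    rw [hhalves, add_mul, inner_sub_left]
    linarith
  rwa [one_div, inv_mul_le_iff₀ hL] at hsum

theorem gradient_norm_decrease_step_general (hL : 0 < L) (hconv : ConvexOn ℝ Set.univ f)
    (hdiff : Differentiable ℝ f)
    (hsmooth : ∀ y z, ‖gradient f y - gradient f z‖ ≤ L * ‖y - z‖) (x : F) {t : ℝ}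
    (ht₀ : 0 ≤ t) (ht : t ≤ 2 / L) :
    ‖gradient f (x - t • gradient f x)‖ ≤ ‖gradient f x‖ := by
  have hcoco := gradient_cocoercive hL hconv hdiff hsmooth x (x - t • gradient f x)
  rw [sub_sub_cancel, inner_smul_right, ← mul_assoc] at hcoco
  exact norm_le_norm_of_norm_sub_sq_le_mul_inner (by positivity) ((le_div_iff₀' hL).1 ht) hcoco

end InnerProductSpace

/-- Monotone decrease of the gradient norm under a gradient step (Euclidean case of
Lemma 3.8(2)): for a convex differentiable `L`-smooth `f` and any `x`, the point
`x⁺ := x - (1/L)∇f(x)` satisfies `‖∇f(x⁺)‖ ≤ ‖∇f(x)‖`. -/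
theorem gradient_norm_decrease_step {n : ℕ} (hn : 1 ≤ n)
    (f : EuclideanSpace ℝ (Fin n) → ℝ) (L : ℝ) (hL : 0 < L)
    (hconv : ConvexOn ℝ Set.univ f) (hdiff : Differentiable ℝ f)
    (hsmooth : ∀ y z : EuclideanSpace ℝ (Fin n),
      ‖gradient f y - gradient f z‖ ≤ L * ‖y - z‖)
    (x : EuclideanSpace ℝ (Fin n)) :
    ‖gradient f (x - (1 / L) • gradient f x)‖ ≤ ‖gradient f x‖ := by
  exact gradient_norm_decrease_step_general hL hconv hdiff hsmooth x
    (by positivity) (by gcongr; norm_num)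
end

section
/- Convergence of the gradient norm along gradient descent (Euclidean case of Theorem 3.7(1)): suppose κ* := inf_{y ∈ ℝⁿ} ‖∇f(y)‖ > 0 and let (x_i) be the gradient-descent sequence with step size 1/L from any initial point x₀. Then ‖∇f(x_i)‖ converges to κ* as i → ∞. -/
open Filter
open scoped RealInnerProductSpace

/-!
The step `T y = y - (1 / L) • ∇f y` is firmly nonexpansive, by the Baillon–Haddad theorem. Along
two orbits of `T` the squared distances therefore drop by at least the squared difference of the
displacements `y - T y`, so these differences are square summable and tend to zero. Displacements do
not grow along an orbit, so an orbit started at a near-minimiser of `‖y - T y‖` keeps a nearly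
minimal displacement, and every other orbit has to follow it.
-/

open AffineMap (lineMap)
open scoped Gradient Topology

section FirmlyNonexpansive

variable {E : Type*} [SeminormedAddCommGroup E] {T : E → E}

/-- Firm nonexpansiveness of a self-map, in the form that in a Hilbert space is equivalent to
`‖T x - T y‖ ^ 2 ≤ ⟪T x - T y, x - y⟫` but does not mention the inner product. It expresses that `T`
is nonexpansive with a gain measured by the displacement `x - T x`. -/
def FirmlyNonexpansive (T : E → E) : Prop :=
  ∀ x y, ‖T x - T y‖ ^ 2 + ‖(x - T x) - (y - T y)‖ ^ 2 ≤ ‖x - y‖ ^ 2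

namespace FirmlyNonexpansive

lemma lipschitzWith_one (hT : FirmlyNonexpansive T) : LipschitzWith 1 T := by
  refine LipschitzWith.mk_one fun x y => ?_
  rw [dist_eq_norm, dist_eq_norm]
  refine le_of_sq_le_sq ?_ (norm_nonneg _)
  linarith [hT x y, sq_nonneg ‖(x - T x) - (y - T y)‖]

lemma norm_displacement_iterate_le (hT : FirmlyNonexpansive T) (y : E) (i : ℕ) :
    ‖T^[i] y - T (T^[i] y)‖ ≤ ‖y - T y‖ := by
  simpa [dist_eq_norm, Function.iterate_succ_apply'] using
    hT.lipschitzWith_one.dist_iterate_succ_le_geometric y i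

variable {x y : ℕ → E}

lemma sum_sq_norm_displacement_sub_le (hT : FirmlyNonexpansive T)
    (hx : ∀ i, x (i + 1) = T (x i)) (hy : ∀ i, y (i + 1) = T (y i)) (m : ℕ) :
    ∑ i ∈ Finset.range m, ‖(x i - T (x i)) - (y i - T (y i))‖ ^ 2
      ≤ ‖x 0 - y 0‖ ^ 2 - ‖x m - y m‖ ^ 2 := by
  rw [← Finset.sum_range_sub' (fun i => ‖x i - y i‖ ^ 2)]
  refine Finset.sum_le_sum fun i _ => ?_
  rw [hx, hy]
  linarith [hT (x i) (y i)]

lemma tendsto_norm_displacement_sub (hT : FirmlyNonexpansive T)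
    (hx : ∀ i, x (i + 1) = T (x i)) (hy : ∀ i, y (i + 1) = T (y i)) :
    Tendsto (fun i => ‖(x i - T (x i)) - (y i - T (y i))‖) atTop (𝓝 0) := by
  have hsummable : Summable fun i => ‖(x i - T (x i)) - (y i - T (y i))‖ ^ 2 :=
    summable_of_sum_range_le (fun _ => sq_nonneg _) fun m =>
      (hT.sum_sq_norm_displacement_sub_le hx hy m).trans (sub_le_self _ (sq_nonneg _))
  simpa using hsummable.tendsto_atTop_zero.sqrt

theorem tendsto_norm_displacement (hT : FirmlyNonexpansive T) (hx : ∀ i, x (i + 1) = T (x i)) :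
    Tendsto (fun i => ‖x i - T (x i)‖) atTop (𝓝 (⨅ y, ‖y - T y‖)) := by
  have hbdd : BddBelow (Set.range fun y => ‖y - T y‖) :=
    ⟨0, Set.forall_mem_range.2 fun _ => norm_nonneg _⟩
  refine tendsto_order.2 ⟨fun a ha => .of_forall fun i => ha.trans_le (ciInf_le hbdd _),
    fun a ha => ?_⟩
  obtain ⟨y, hy⟩ := exists_lt_of_ciInf_lt ha
  have hclose := hT.tendsto_norm_displacement_sub (y := fun i => T^[i] y) hx
    fun i => Function.iterate_succ_apply' T i y
  filter_upwards [hclose.eventually_lt_const (sub_pos.2 hy)] with i hi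
  calc ‖x i - T (x i)‖
      ≤ ‖T^[i] y - T (T^[i] y)‖ + ‖(x i - T (x i)) - (T^[i] y - T (T^[i] y))‖ :=
        norm_le_norm_add_norm_sub' _ _
    _ < ‖y - T y‖ + (a - ‖y - T y‖) :=
        add_lt_add_of_le_of_lt (hT.norm_displacement_iterate_le y i) hi
    _ = a := add_sub_cancel _ _

end FirmlyNonexpansive

end FirmlyNonexpansive

lemma firmlyNonexpansive_sub_smul_of_cocoercive {E : Type*} [SeminormedAddCommGroup E]
    [InnerProductSpace ℝ E] {g : E → E} {c : ℝ} (hc : 0 ≤ c)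
    (hg : ∀ x y, c * ‖g x - g y‖ ^ 2 ≤ ⟪g x - g y, x - y⟫) :
    FirmlyNonexpansive fun x => x - c • g x := by
  intro x y
  have hdisp : (x - (x - c • g x)) - (y - (y - c • g y)) = c • (g x - g y) := by module
  have hstep : (x - c • g x) - (y - c • g y) = (x - y) - c • (g x - g y) := by module
  rw [hdisp, hstep, norm_sub_sq_real, norm_smul, mul_pow, Real.norm_eq_abs, sq_abs,
    real_inner_smul_right, real_inner_comm]
  linarith [mul_le_mul_of_nonneg_left (hg x y) hc]

section Gradient

variable {E : Type*} [NormedAddCommGroup E] [InnerProductSpace ℝ E] [CompleteSpace E]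
  {f : E → ℝ} {L : ℝ}

lemma hasDerivAt_comp_lineMap_of_hasGradientAt {y z g : E} {t : ℝ}
    (hg : HasGradientAt f g (lineMap y z t)) :
    HasDerivAt (fun s : ℝ => f (lineMap y z s)) ⟪g, z - y⟫ t :=
  hg.hasFDerivAt.comp_hasDerivAt t AffineMap.hasDerivAt_lineMap

lemma add_inner_le_of_convexOn_of_hasGradientAt {s : Set E} (hconv : ConvexOn ℝ s f) {y z g : E}
    (hy : y ∈ s) (hz : z ∈ s) (hg : HasGradientAt f g y) : f y + ⟪g, z - y⟫ ≤ f z := by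
  have hderiv : HasDerivAt (fun t : ℝ => f (lineMap y z t)) ⟪g, z - y⟫ 0 :=
    hasDerivAt_comp_lineMap_of_hasGradientAt (by simpa using hg)
  have hslope := (hconv.comp_affineMap (lineMap y z)).le_slope_of_hasDerivAt
    (x := 0) (y := 1) (by simpa using hy) (by simpa using hz) zero_lt_one hderiv
  simp only [slope_def_field, Function.comp_apply, AffineMap.lineMap_apply_one,
    AffineMap.lineMap_apply_zero, sub_zero, div_one] at hslope
  linarith

lemma inner_gradient_lineMap_le {y : E} (hlip : ∀ z, ‖∇ f z - ∇ f y‖ ≤ L * ‖z - y‖) (z : E)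
    {t : ℝ} (ht : 0 ≤ t) :
    ⟪∇ f (lineMap y z t), z - y⟫ ≤ ⟪∇ f y, z - y⟫ + t * (L * ‖z - y‖ ^ 2) := by
  have hnorm : ‖lineMap y z t - y‖ = t * ‖z - y‖ := by
    rw [← dist_eq_norm, dist_lineMap_left, Real.norm_of_nonneg ht, dist_comm, dist_eq_norm]
  rw [← sub_le_iff_le_add', ← inner_sub_left]
  calc ⟪∇ f (lineMap y z t) - ∇ f y, z - y⟫
      ≤ ‖∇ f (lineMap y z t) - ∇ f y‖ * ‖z - y‖ := real_inner_le_norm _ _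
    _ ≤ L * ‖lineMap y z t - y‖ * ‖z - y‖ := by gcongr; exact hlip _
    _ = t * (L * ‖z - y‖ ^ 2) := by rw [hnorm]; ring

lemma le_add_inner_add_sq_of_lipschitz_gradient (hdiff : Differentiable ℝ f) {y : E}
    (hlip : ∀ z, ‖∇ f z - ∇ f y‖ ≤ L * ‖z - y‖) (z : E) :
    f z ≤ f y + ⟪∇ f y, z - y⟫ + L / 2 * ‖z - y‖ ^ 2 := by
  have hline (t : ℝ) :
      HasDerivAt (fun s : ℝ => f (lineMap y z s)) ⟪∇ f (lineMap y z t), z - y⟫ t :=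
    hasDerivAt_comp_lineMap_of_hasGradientAt (hdiff _).hasGradientAt
  have hquad (t : ℝ) :
      HasDerivAt (fun s : ℝ => f y + s * ⟪∇ f y, z - y⟫ + s ^ 2 * (L / 2 * ‖z - y‖ ^ 2))
        (⟪∇ f y, z - y⟫ + t * (L * ‖z - y‖ ^ 2)) t := by
    refine ((((hasDerivAt_id t).mul_const _).const_add _).add
      (((hasDerivAt_id t).pow 2).mul_const _)).congr_deriv ?_
    simp only [id_eq]
    ring
  simpa using image_le_of_deriv_right_le_deriv_boundary
    (fun t _ => (hline t).continuousAt.continuousWithinAt)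
    (fun t _ => (hline t).hasDerivWithinAt) (by simp)
    (fun t _ => (hquad t).continuousAt.continuousWithinAt)
    (fun t _ => (hquad t).hasDerivWithinAt)
    (fun t ht => inner_gradient_lineMap_le hlip z ht.1) (Set.right_mem_Icc.2 zero_le_one)

-- Compare the tangent plane at `x` with the quadratic upper bound at `y` in the point minimising
-- their difference, `y + (1 / L) • (∇ f x - ∇ f y)`.
lemma add_inner_add_sq_gradient_sub_le (hL : 0 < L) (hconv : ConvexOn ℝ Set.univ f)
    (hdiff : Differentiable ℝ f) (hsmooth : ∀ y z, ‖∇ f y - ∇ f z‖ ≤ L * ‖y - z‖) (x y : E) :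
    f x + ⟪∇ f x, y - x⟫ + 1 / L / 2 * ‖∇ f x - ∇ f y‖ ^ 2 ≤ f y := by
  set d := ∇ f x - ∇ f y with hd
  have hlower := add_inner_le_of_convexOn_of_hasGradientAt hconv (Set.mem_univ x)
    (Set.mem_univ (y + (1 / L) • d)) (hdiff x).hasGradientAt
  have hupper := le_add_inner_add_sq_of_lipschitz_gradient hdiff (hsmooth · y) (y + (1 / L) • d)
  have hinner : ⟪∇ f x, (1 / L) • d⟫ - ⟪∇ f y, (1 / L) • d⟫ = 1 / L * ‖d‖ ^ 2 := by
    rw [← inner_sub_left, ← hd, real_inner_smul_right, real_inner_self_eq_norm_sq]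
  have hsq : L / 2 * ‖(1 / L) • d‖ ^ 2 = 1 / L / 2 * ‖d‖ ^ 2 := by
    rw [norm_smul, Real.norm_of_nonneg (by positivity)]
    field_simp
  rw [add_sub_right_comm, inner_add_right] at hlower
  rw [add_sub_cancel_left, hsq] at hupper
  linarith

theorem cocoercive_gradient (hL : 0 < L) (hconv : ConvexOn ℝ Set.univ f)
    (hdiff : Differentiable ℝ f) (hsmooth : ∀ y z, ‖∇ f y - ∇ f z‖ ≤ L * ‖y - z‖) (x y : E) :
    1 / L * ‖∇ f x - ∇ f y‖ ^ 2 ≤ ⟪∇ f x - ∇ f y, x - y⟫ := by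
  have hxy := add_inner_add_sq_gradient_sub_le hL hconv hdiff hsmooth x y
  have hyx := add_inner_add_sq_gradient_sub_le hL hconv hdiff hsmooth y x
  rw [← neg_sub x y, inner_neg_right] at hxy
  rw [norm_sub_rev] at hyx
  rw [inner_sub_left]
  linarith

theorem gradient_descent_gradient_norm_tendsto_general (hL : 0 < L)
    (hconv : ConvexOn ℝ Set.univ f) (hdiff : Differentiable ℝ f)
    (hsmooth : ∀ y z, ‖∇ f y - ∇ f z‖ ≤ L * ‖y - z‖) {x : ℕ → E}
    (hrec : ∀ i, x (i + 1) = x i - (1 / L) • ∇ f (x i)) :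
    Tendsto (fun i => ‖∇ f (x i)‖) atTop (𝓝 (⨅ y, ‖∇ f y‖)) := by
  have hfirm : FirmlyNonexpansive fun y => y - (1 / L) • ∇ f y :=
    firmlyNonexpansive_sub_smul_of_cocoercive (by positivity)
      (cocoercive_gradient hL hconv hdiff hsmooth)
  have hnorm (y : E) : ‖∇ f y‖ = L * ‖y - (y - (1 / L) • ∇ f y)‖ := by
    rw [sub_sub_cancel, norm_smul, Real.norm_of_nonneg (by positivity), ← mul_assoc,
      mul_one_div_cancel hL.ne', one_mul]
  rw [iInf_congr hnorm, ← Real.mul_iInf_of_nonneg hL.le]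
  simpa only [← hnorm] using (hfirm.tendsto_norm_displacement hrec).const_mul L

end Gradient

/-- Convergence of the gradient norm along gradient descent (Euclidean case of
Theorem 3.7(1)): if `κ* := inf_y ‖∇f(y)‖ > 0` and `(x_i)` is the gradient-descent
sequence with step size `1/L` from any initial point, then `‖∇f(x_i)‖ → κ*`. -/
theorem gradient_descent_gradient_norm_tendsto {n : ℕ} (hn : 1 ≤ n)
    (f : EuclideanSpace ℝ (Fin n) → ℝ) (L : ℝ) (hL : 0 < L)
    (hconv : ConvexOn ℝ Set.univ f) (hdiff : Differentiable ℝ f)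
    (hsmooth : ∀ y z : EuclideanSpace ℝ (Fin n),
      ‖gradient f y - gradient f z‖ ≤ L * ‖y - z‖)
    (hκ : 0 < ⨅ y, ‖gradient f y‖)
    (x : ℕ → EuclideanSpace ℝ (Fin n))
    (hrec : ∀ i : ℕ, x (i + 1) = x i - (1 / L) • gradient f (x i)) :
    Tendsto (fun i => ‖gradient f (x i)‖) atTop (nhds (⨅ y, ‖gradient f y‖)) :=
  gradient_descent_gradient_norm_tendsto_general hL hconv hdiff hsmooth hrec
end

section
/- Limiting decrement of the function value along gradient descent (Euclidean case of Proposition 3.9(1)): suppose κ* := inf_{y ∈ ℝⁿ} ‖∇f(y)‖ > 0 and let (x_i) be the gradient-descent sequence with step size 1/L from any initial point x₀. Then f(x_{i+1}) − f(x_i) converges to −(κ*)²/L as i → ∞. -/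
open Filter
open scoped RealInnerProductSpace

open Set Topology
open scoped Gradient

/-!
Along `x⁺ = x - ∇f(x) / L` the value drops by at most `‖∇f(x)‖² / L` (convexity) and by at least
`(‖∇f(x)‖² + ‖∇f(x⁺)‖²) / (2L)` (convexity and smoothness). Hence `‖∇f(x_i)‖` decreases to some
limit `m`, and the decrement of the value tends to `-m² / L`. To see that `m ≤ ‖∇f(y)‖` for every
`y`, consider `f(z) + ‖∇f(y)‖ ‖z - y‖`: it is bounded below by `f(y)`, while along the iteration its
decrement is at least a quantity tending to `m (m - ‖∇f(y)‖) / L`, which therefore cannot be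
positive.
-/

namespace GradientDescent

lemma nonpos_of_tendsto_of_le_sub_succ {φ d : ℕ → ℝ} {c : ℝ} (hφ : BddBelow (range φ))
    (hd : ∀ i, d i ≤ φ i - φ (i + 1)) (hc : Tendsto d atTop (𝓝 c)) : c ≤ 0 := by
  obtain ⟨b, hb⟩ := hφ
  have sum_le (n : ℕ) : ∑ i ∈ Finset.range n, d i ≤ φ 0 - b := calc
    ∑ i ∈ Finset.range n, d i ≤ ∑ i ∈ Finset.range n, (φ i - φ (i + 1)) :=
      Finset.sum_le_sum fun i _ => hd i
    _ = φ 0 - φ n := Finset.sum_range_sub' φ n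
    _ ≤ φ 0 - b := sub_le_sub_left (hb (mem_range_self n)) _
  have bound_tendsto : Tendsto (fun n : ℕ => (n : ℝ)⁻¹ * (φ 0 - b)) atTop (𝓝 0) := by
    simpa using (tendsto_inv_atTop_nhds_zero_nat (𝕜 := ℝ)).mul_const (φ 0 - b)
  exact le_of_tendsto_of_tendsto' hc.cesaro bound_tendsto fun n =>
    mul_le_mul_of_nonneg_left (sum_le n) (by positivity)

section NormedSpace

variable {E : Type*} [NormedAddCommGroup E] [NormedSpace ℝ E] {f : E → ℝ} {y z : E}

lemma add_fderiv_sub_le_of_convexOn {s : Set E} {f' : E →L[ℝ] ℝ} (hconv : ConvexOn ℝ s f)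
    (hy : y ∈ s) (hz : z ∈ s) (hf' : HasFDerivAt f f' y) : f y + f' (z - y) ≤ f z := by
  have hconv_line : ConvexOn ℝ (AffineMap.lineMap y z ⁻¹' s) (f ∘ AffineMap.lineMap (k := ℝ) y z) :=
    hconv.comp_affineMap _
  have hderiv : HasDerivAt (f ∘ AffineMap.lineMap (k := ℝ) y z) (f' (z - y)) 0 :=
    HasFDerivAt.comp_hasDerivAt 0 (by simpa using hf') AffineMap.hasDerivAt_lineMap
  have hslope := hconv_line.le_slope_of_hasDerivAt (by simpa using hy) (by simpa using hz)
    one_pos hderiv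
  simp only [slope_def_field, Function.comp_apply, AffineMap.lineMap_apply_one,
    AffineMap.lineMap_apply_zero, sub_zero, div_one] at hslope
  linarith

lemma le_add_fderiv_sub_add_sq {L : ℝ} (hdiff : Differentiable ℝ f)
    (hsmooth : ∀ w, ‖fderiv ℝ f w - fderiv ℝ f y‖ ≤ L * ‖w - y‖) :
    f z ≤ f y + fderiv ℝ f y (z - y) + L / 2 * ‖z - y‖ ^ 2 := by
  let γ : ℝ → E := AffineMap.lineMap y z
  have hline (t : ℝ) : HasDerivAt (f ∘ γ) (fderiv ℝ f (γ t) (z - y)) t :=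
    (hdiff (γ t)).hasFDerivAt.comp_hasDerivAt t AffineMap.hasDerivAt_lineMap
  have hquad (t : ℝ) : HasDerivAt
      (fun t => f y + t * fderiv ℝ f y (z - y) + L / 2 * ‖z - y‖ ^ 2 * t ^ 2)
      (fderiv ℝ f y (z - y) + L / 2 * ‖z - y‖ ^ 2 * (2 * t)) t := by
    refine HasDerivAt.add ?_ ?_
    · simpa using ((hasDerivAt_id t).mul_const (fderiv ℝ f y (z - y))).const_add (f y)
    · simpa using (hasDerivAt_pow 2 t).const_mul (L / 2 * ‖z - y‖ ^ 2)
  have hderiv_le (t : ℝ) (ht : t ∈ Ico (0 : ℝ) 1) : fderiv ℝ f (γ t) (z - y) ≤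
      fderiv ℝ f y (z - y) + L / 2 * ‖z - y‖ ^ 2 * (2 * t) := by
    have hγ : ‖γ t - y‖ = t * ‖z - y‖ := by
      simp [γ, AffineMap.lineMap_apply, norm_smul, abs_of_nonneg ht.1]
    have hgrowth : (fderiv ℝ f (γ t) - fderiv ℝ f y) (z - y) ≤ L * (t * ‖z - y‖) * ‖z - y‖ :=
      hγ ▸ (le_abs_self _).trans (ContinuousLinearMap.le_of_opNorm_le _ (hsmooth (γ t)) (z - y))
    rw [sub_apply] at hgrowth
    linarith
  have hle := image_le_of_deriv_right_le_deriv_boundary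
    (fun t _ => (hline t).continuousAt.continuousWithinAt)
    (fun t _ => (hline t).hasDerivWithinAt) (by simp [γ])
    (fun t _ => (hquad t).continuousAt.continuousWithinAt)
    (fun t _ => (hquad t).hasDerivWithinAt) hderiv_le (right_mem_Icc.2 zero_le_one)
  simpa [γ] using hle

end NormedSpace

variable {E : Type*} [NormedAddCommGroup E] [InnerProductSpace ℝ E] [CompleteSpace E]
  {f : E → ℝ} {L : ℝ}

lemma add_inner_gradient_le_of_convexOn {s : Set E} {y z : E} (hconv : ConvexOn ℝ s f)
    (hy : y ∈ s) (hz : z ∈ s) (hdiff : DifferentiableAt ℝ f y) :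
    f y + ⟪∇ f y, z - y⟫ ≤ f z := by
  rw [inner_gradient_left]
  exact add_fderiv_sub_le_of_convexOn hconv hy hz hdiff.hasFDerivAt

lemma apply_le_add_norm_gradient_mul_norm_sub {s : Set E} {y z : E} (hconv : ConvexOn ℝ s f)
    (hy : y ∈ s) (hz : z ∈ s) (hdiff : DifferentiableAt ℝ f y) :
    f y ≤ f z + ‖∇ f y‖ * ‖z - y‖ := by
  have htangent := add_inner_gradient_le_of_convexOn hconv hy hz hdiff
  have hcauchy := neg_le_of_abs_le (abs_real_inner_le_norm (∇ f y) (z - y))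
  linarith

lemma le_add_inner_gradient_add_sq {y : E} (hdiff : Differentiable ℝ f)
    (hsmooth : ∀ w, ‖∇ f w - ∇ f y‖ ≤ L * ‖w - y‖) (z : E) :
    f z ≤ f y + ⟪∇ f y, z - y⟫ + L / 2 * ‖z - y‖ ^ 2 := by
  rw [inner_gradient_left]
  refine le_add_fderiv_sub_add_sq hdiff fun w => ?_
  rw [← toDual_gradient, ← toDual_gradient, ← map_sub, LinearIsometryEquiv.norm_map]
  exact hsmooth w

/-- The explicit gradient step `y ↦ y - η ∇f(y)` with step size `η`, whose orbits are the
gradient-descent sequences. -/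
noncomputable def gradientStep (f : E → ℝ) (η : ℝ) (y : E) : E := y - η • ∇ f y

lemma sub_gradientStep (f : E → ℝ) (η : ℝ) (y : E) : y - gradientStep f η y = η • ∇ f y :=
  sub_sub_cancel _ _

lemma sub_apply_gradientStep_le {y : E} (hconv : ConvexOn ℝ univ f)
    (hdiff : DifferentiableAt ℝ f y) (η : ℝ) :
    f y - f (gradientStep f η y) ≤ η * ‖∇ f y‖ ^ 2 := by
  have htangent :=
    add_inner_gradient_le_of_convexOn hconv (mem_univ y) (mem_univ (gradientStep f η y)) hdiff
  rw [← neg_sub y, sub_gradientStep, inner_neg_right, real_inner_smul_right,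
    real_inner_self_eq_norm_sq] at htangent
  linarith

section Smooth

variable (hL : 0 < L) (hconv : ConvexOn ℝ univ f) (hdiff : Differentiable ℝ f)
  (hsmooth : ∀ y z, ‖∇ f y - ∇ f z‖ ≤ L * ‖y - z‖)

include hL hconv hdiff hsmooth

lemma add_inner_gradient_add_norm_gradient_sub_sq_le (y z : E) :
    f y + ⟪∇ f y, z - y⟫ + ‖∇ f z - ∇ f y‖ ^ 2 / (2 * L) ≤ f z := by
  -- `z - v` minimizes the quadratic upper model of `f` at `z` minus the tangent of `f` at `y`.
  set v := (1 / L) • (∇ f z - ∇ f y) with hv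
  have htangent := add_inner_gradient_le_of_convexOn hconv (mem_univ y) (mem_univ (z - v)) (hdiff y)
  have hmodel := le_add_inner_gradient_add_sq hdiff (fun w => hsmooth w z) (z - v)
  rw [sub_right_comm, inner_sub_right] at htangent
  rw [sub_sub_cancel_left, norm_neg, inner_neg_right] at hmodel
  have hinner : ⟪∇ f z, v⟫ - ⟪∇ f y, v⟫ = ‖∇ f z - ∇ f y‖ ^ 2 / L := by
    rw [← inner_sub_left, hv, real_inner_smul_right, real_inner_self_eq_norm_sq]
    ring
  have hnorm : L / 2 * ‖v‖ ^ 2 = ‖∇ f z - ∇ f y‖ ^ 2 / L / 2 := by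
    rw [hv, norm_smul, Real.norm_of_nonneg (by positivity)]
    field_simp
  have hhalf : ‖∇ f z - ∇ f y‖ ^ 2 / (2 * L) = ‖∇ f z - ∇ f y‖ ^ 2 / L / 2 := by ring
  linarith

lemma norm_gradient_sq_add_sq_div_le_sub_apply_gradientStep (y : E) :
    (‖∇ f y‖ ^ 2 + ‖∇ f (gradientStep f (1 / L) y)‖ ^ 2) / (2 * L) ≤
      f y - f (gradientStep f (1 / L) y) := by
  have hlower := add_inner_gradient_add_norm_gradient_sub_sq_le hL hconv hdiff hsmooth
    (gradientStep f (1 / L) y) y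
  rw [sub_gradientStep, real_inner_smul_right, norm_sub_sq_real, real_inner_comm] at hlower
  -- The two occurrences of `⟪∇ f y, ∇ f y⁺⟫` cancel because the step size is exactly `1 / L`.
  linear_combination hlower

lemma norm_gradient_gradientStep_le (y : E) :
    ‖∇ f (gradientStep f (1 / L) y)‖ ≤ ‖∇ f y‖ := by
  have hsandwich :=
    (norm_gradient_sq_add_sq_div_le_sub_apply_gradientStep hL hconv hdiff hsmooth y).trans
      (sub_apply_gradientStep_le hconv (hdiff y) (1 / L))
  rw [div_le_iff₀ (by positivity)] at hsandwich
  have hcancel : 1 / L * ‖∇ f y‖ ^ 2 * (2 * L) = 2 * ‖∇ f y‖ ^ 2 := by field_simp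
  exact le_of_sq_le_sq (by linarith) (norm_nonneg _)

variable {x : ℕ → E} (hx : ∀ i, x (i + 1) = gradientStep f (1 / L) (x i))

include hx

lemma antitone_norm_gradient : Antitone fun i => ‖∇ f (x i)‖ :=
  antitone_nat_of_succ_le fun i =>
    hx i ▸ norm_gradient_gradientStep_le hL hconv hdiff hsmooth (x i)

lemma tendsto_sub_succ_of_tendsto_norm_gradient {m : ℝ}
    (hm : Tendsto (fun i => ‖∇ f (x i)‖) atTop (𝓝 m)) :
    Tendsto (fun i => f (x i) - f (x (i + 1))) atTop (𝓝 (m ^ 2 / L)) := by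
  have hlower : Tendsto (fun i => (‖∇ f (x i)‖ ^ 2 + ‖∇ f (x (i + 1))‖ ^ 2) / (2 * L)) atTop
      (𝓝 (m ^ 2 / L)) := by
    have hm_succ : Tendsto (fun i => ‖∇ f (x (i + 1))‖) atTop (𝓝 m) :=
      hm.comp (tendsto_add_atTop_nat 1)
    convert ((hm.pow 2).add (hm_succ.pow 2)).div_const (2 * L) using 2
    ring
  have hupper : Tendsto (fun i => 1 / L * ‖∇ f (x i)‖ ^ 2) atTop (𝓝 (m ^ 2 / L)) := by
    convert (hm.pow 2).const_mul (1 / L) using 2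
    ring
  refine tendsto_of_tendsto_of_tendsto_of_le_of_le hlower hupper (fun i => ?_) (fun i => ?_)
  · simpa only [hx i] using
      norm_gradient_sq_add_sq_div_le_sub_apply_gradientStep hL hconv hdiff hsmooth (x i)
  · simpa only [hx i] using sub_apply_gradientStep_le hconv (hdiff (x i)) (1 / L)

lemma le_norm_gradient_of_tendsto_norm_gradient {m : ℝ}
    (hm : Tendsto (fun i => ‖∇ f (x i)‖) atTop (𝓝 m)) (y : E) : m ≤ ‖∇ f y‖ := by
  let φ : ℕ → ℝ := fun i => f (x i) + ‖∇ f y‖ * ‖x i - y‖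
  have hφ_bdd : BddBelow (range φ) := ⟨f y, forall_mem_range.2 fun i =>
    apply_le_add_norm_gradient_mul_norm_sub hconv (mem_univ y) (mem_univ (x i)) (hdiff y)⟩
  have hφ_decrement (i : ℕ) :
      f (x i) - f (x (i + 1)) - ‖∇ f y‖ * (1 / L * ‖∇ f (x i)‖) ≤ φ i - φ (i + 1) := by
    have hdist : ‖x i - x (i + 1)‖ = 1 / L * ‖∇ f (x i)‖ := by
      rw [hx i, sub_gradientStep, norm_smul, Real.norm_of_nonneg (by positivity)]
    have htriangle : ‖x (i + 1) - y‖ ≤ ‖x i - x (i + 1)‖ + ‖x i - y‖ := by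
      rw [norm_sub_rev (x i) (x (i + 1))]
      exact norm_sub_le_norm_sub_add_norm_sub _ _ _
    have hscaled := mul_le_mul_of_nonneg_left (hdist ▸ htriangle) (norm_nonneg (∇ f y))
    simp only [φ]
    linarith
  have hlimit : m ^ 2 / L - ‖∇ f y‖ * (1 / L * m) ≤ 0 :=
    nonpos_of_tendsto_of_le_sub_succ hφ_bdd hφ_decrement <|
      (tendsto_sub_succ_of_tendsto_norm_gradient hL hconv hdiff hsmooth hx hm).sub
        ((hm.const_mul _).const_mul _)
  by_contra! hlt
  have hm_pos : 0 < m := (norm_nonneg _).trans_lt hlt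
  have hpos : 0 < m * (m - ‖∇ f y‖) / L := div_pos (mul_pos hm_pos (sub_pos.2 hlt)) hL
  have hfactor : m ^ 2 / L - ‖∇ f y‖ * (1 / L * m) = m * (m - ‖∇ f y‖) / L := by ring
  linarith

lemma tendsto_norm_gradient : Tendsto (fun i => ‖∇ f (x i)‖) atTop (𝓝 (⨅ y, ‖∇ f y‖)) := by
  have hbdd : BddBelow (range fun y => ‖∇ f y‖) :=
    ⟨0, forall_mem_range.2 fun _ => norm_nonneg _⟩
  have hlim := tendsto_atTop_ciInf (antitone_norm_gradient hL hconv hdiff hsmooth hx)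
    (hbdd.mono (range_comp_subset_range x (‖∇ f ·‖)))
  have hinf : ⨅ i, ‖∇ f (x i)‖ = ⨅ y, ‖∇ f y‖ := le_antisymm
    (le_ciInf <| le_norm_gradient_of_tendsto_norm_gradient hL hconv hdiff hsmooth hx hlim)
    (le_ciInf fun i => ciInf_le hbdd (x i))
  rwa [hinf] at hlim

end Smooth

end GradientDescent

open GradientDescent in
theorem gradient_descent_value_decrement_general {E : Type*} [NormedAddCommGroup E]
    [InnerProductSpace ℝ E] [CompleteSpace E] (f : E → ℝ) (L : ℝ) (hL : 0 < L)
    (hconv : ConvexOn ℝ univ f) (hdiff : Differentiable ℝ f)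
    (hsmooth : ∀ y z, ‖∇ f y - ∇ f z‖ ≤ L * ‖y - z‖)
    (x : ℕ → E) (hrec : ∀ i, x (i + 1) = x i - (1 / L) • ∇ f (x i)) :
    Tendsto (fun i => f (x (i + 1)) - f (x i)) atTop (𝓝 (-(⨅ y, ‖∇ f y‖) ^ 2 / L)) := by
  have hgrad := tendsto_norm_gradient hL hconv hdiff hsmooth hrec
  have hdecr := tendsto_sub_succ_of_tendsto_norm_gradient hL hconv hdiff hsmooth hrec hgrad
  simpa only [neg_sub, neg_div] using hdecr.neg

/-- Limiting decrement of the function value along gradient descent (Euclidean case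
of Proposition 3.9(1)): if `κ* := inf_y ‖∇f(y)‖ > 0` and `(x_i)` is the
gradient-descent sequence with step size `1/L`, then
`f(x_{i+1}) - f(x_i) → -(κ*)²/L`. -/
theorem gradient_descent_value_decrement {n : ℕ} (hn : 1 ≤ n)
    (f : EuclideanSpace ℝ (Fin n) → ℝ) (L : ℝ) (hL : 0 < L)
    (hconv : ConvexOn ℝ Set.univ f) (hdiff : Differentiable ℝ f)
    (hsmooth : ∀ y z : EuclideanSpace ℝ (Fin n),
      ‖gradient f y - gradient f z‖ ≤ L * ‖y - z‖)
    (hκ : 0 < ⨅ y, ‖gradient f y‖)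
    (x : ℕ → EuclideanSpace ℝ (Fin n))
    (hrec : ∀ i : ℕ, x (i + 1) = x i - (1 / L) • gradient f (x i)) :
    Tendsto (fun i => f (x (i + 1)) - f (x i)) atTop
      (nhds (-(⨅ y, ‖gradient f y‖) ^ 2 / L)) :=
  gradient_descent_value_decrement_general f L hL hconv hdiff hsmooth x hrec
end
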